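/- arXiv:2401.14875 — 6 statements merged into one kernel-verified Lean document; each statement's English description precedes it below -/
import Mathlib

section
/- Let 0 → C →f E →g M → 0 be a non-abelian extension of λ-weighted Rota-Baxter Lie coalgebras with retraction t, and let (h, ρ, φ) be the induced non-abelian 2-cocycle. A pair (α, β) ∈ Aut(C)×Aut(M) is extensible with respect to this extension if and only if the non-abelian 2-cocycles (h_{(α,β)}, ρ_{(α,β)}, φ_{(α,β)}) and (h, ρ, φ) are equivalent, where h_{(α,β)} = (α⊗α)hβ^{−1}, ρ_{(α,β)} = (β⊗α)ρβ^{−1}, φ_{(α,β)} = αφβ^{−1}. -/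
open TensorProduct LinearMap

section

variable {k : Type*} [Field k]
variable {C : Type*} [AddCommGroup C] [Module k C]
variable {M : Type*} [AddCommGroup M] [Module k M]
variable {E : Type*} [AddCommGroup E] [Module k E]

/-- Co-antisymmetry of a cobracket: `Δ = -τΔ`. -/
def CoAnti (Δ : C →ₗ[k] C ⊗[k] C) : Prop :=
  Δ = -((TensorProduct.comm k C C).toLinearMap ∘ₗ Δ)

/-- The co-Jacobi identity `(I⊗Δ)Δ - (Δ⊗I)Δ + (I⊗τ)(Δ⊗I)Δ = 0`. -/
def CoJacobi (Δ : C →ₗ[k] C ⊗[k] C) : Prop :=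
  lTensor C Δ ∘ₗ Δ
    - (TensorProduct.assoc k C C C).toLinearMap ∘ₗ rTensor C Δ ∘ₗ Δ
    + lTensor C (TensorProduct.comm k C C).toLinearMap ∘ₗ
        (TensorProduct.assoc k C C C).toLinearMap ∘ₗ rTensor C Δ ∘ₗ Δ = 0

/-- `(R⊗R)Δ = (I⊗R + R⊗I + λI) Δ R`. -/
def IsRBO (lam : k) (Δ : C →ₗ[k] C ⊗[k] C) (R : C →ₗ[k] C) : Prop :=
  TensorProduct.map R R ∘ₗ Δ
    = (lTensor C R + rTensor C R + lam • (LinearMap.id : C ⊗[k] C →ₗ[k] C ⊗[k] C)) ∘ₗ Δ ∘ₗ R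

/-- `λ`-weighted Rota-Baxter Lie coalgebra. -/
def IsRBLC (lam : k) (Δ : C →ₗ[k] C ⊗[k] C) (R : C →ₗ[k] C) : Prop :=
  CoAnti Δ ∧ CoJacobi Δ ∧ IsRBO lam Δ R

/-- Homomorphism of `λ`-weighted Rota-Baxter Lie coalgebras:
`(θ⊗θ)Δ_C = Δ_E θ` and `R_E θ = θ R_C`. -/
def IsHom (ΔC : C →ₗ[k] C ⊗[k] C) (RC : C →ₗ[k] C)
    (ΔE : E →ₗ[k] E ⊗[k] E) (RE : E →ₗ[k] E) (θ : C →ₗ[k] E) : Prop :=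
  TensorProduct.map θ θ ∘ₗ ΔC = ΔE ∘ₗ θ ∧ RE ∘ₗ θ = θ ∘ₗ RC

/-- Non-abelian 2-cocycle `(h, ρ, φ)` on `(C, Δ_C, R_C)` with values in `(M, Δ_M, R_M)`. -/
def NA2Cocycle (lam : k) (ΔC : C →ₗ[k] C ⊗[k] C) (RC : C →ₗ[k] C)
    (ΔM : M →ₗ[k] M ⊗[k] M) (RM : M →ₗ[k] M)
    (h : M →ₗ[k] C ⊗[k] C) (ρ : M →ₗ[k] M ⊗[k] C) (φ : M →ₗ[k] C) : Prop :=
  -- (1)  τh + h = 0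
  ((TensorProduct.comm k C C).toLinearMap ∘ₗ h + h = 0) ∧
  -- (2)  (I⊗Δ_C)h − (Δ_C⊗I)h + (I⊗τ)(Δ_C⊗I)h = (h⊗I)ρ + (I⊗h)τρ − (I⊗τ)(h⊗I)ρ
  (lTensor C ΔC ∘ₗ h
      - (TensorProduct.assoc k C C C).toLinearMap ∘ₗ rTensor C ΔC ∘ₗ h
      + lTensor C (TensorProduct.comm k C C).toLinearMap ∘ₗ
          (TensorProduct.assoc k C C C).toLinearMap ∘ₗ rTensor C ΔC ∘ₗ h
    = (TensorProduct.assoc k C C C).toLinearMap ∘ₗ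
        TensorProduct.map h (LinearMap.id : C →ₗ[k] C) ∘ₗ ρ
      + lTensor C h ∘ₗ (TensorProduct.comm k M C).toLinearMap ∘ₗ ρ
      - lTensor C (TensorProduct.comm k C C).toLinearMap ∘ₗ
          (TensorProduct.assoc k C C C).toLinearMap ∘ₗ
          TensorProduct.map h (LinearMap.id : C →ₗ[k] C) ∘ₗ ρ) ∧
  -- (3)  (I⊗Δ_C)ρ + (I⊗h)Δ_M = (ρ⊗I)ρ − (I⊗τ)(ρ⊗I)ρ
  (lTensor M ΔC ∘ₗ ρ + lTensor M h ∘ₗ ΔM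
    = (TensorProduct.assoc k M C C).toLinearMap ∘ₗ rTensor C ρ ∘ₗ ρ
      - lTensor M (TensorProduct.comm k C C).toLinearMap ∘ₗ
          (TensorProduct.assoc k M C C).toLinearMap ∘ₗ rTensor C ρ ∘ₗ ρ) ∧
  -- (4)  (Δ_M⊗I)ρ = (I⊗τ)(ρ⊗I)Δ_M + (I⊗ρ)Δ_M
  ((TensorProduct.assoc k M M C).toLinearMap ∘ₗ rTensor C ΔM ∘ₗ ρ
    = lTensor M (TensorProduct.comm k C M).toLinearMap ∘ₗ
        (TensorProduct.assoc k M C M).toLinearMap ∘ₗ rTensor M ρ ∘ₗ ΔM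
      + lTensor M ρ ∘ₗ ΔM) ∧
  -- (5)
  (TensorProduct.map φ RC ∘ₗ ρ
      - TensorProduct.map RC φ ∘ₗ (TensorProduct.comm k M C).toLinearMap ∘ₗ ρ
      - TensorProduct.map φ (LinearMap.id : C →ₗ[k] C) ∘ₗ ρ ∘ₗ RM
      + lTensor C φ ∘ₗ (TensorProduct.comm k M C).toLinearMap ∘ₗ ρ ∘ₗ RM
      + TensorProduct.map φ φ ∘ₗ ΔM
      - (lTensor C RC + rTensor C RC
          + lam • (LinearMap.id : C ⊗[k] C →ₗ[k] C ⊗[k] C)) ∘ₗ ΔC ∘ₗ φ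
    = (rTensor C RC + lTensor C RC
        + lam • (LinearMap.id : C ⊗[k] C →ₗ[k] C ⊗[k] C)) ∘ₗ h ∘ₗ RM
      - TensorProduct.map RC RC ∘ₗ h) ∧
  -- (6)  (R_M⊗φ)Δ_M + (R_M⊗R_C)ρ = (I⊗φ)Δ_M R_M + (I⊗R_C + R_M⊗I + λ)ρR_M
  (TensorProduct.map RM φ ∘ₗ ΔM + TensorProduct.map RM RC ∘ₗ ρ
    = lTensor M φ ∘ₗ ΔM ∘ₗ RM
      + (lTensor M RC + rTensor C RM
          + lam • (LinearMap.id : M ⊗[k] C →ₗ[k] M ⊗[k] C)) ∘ₗ ρ ∘ₗ RM)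

/-- The cobracket `Δ_{(h,ρ)}` on `C ⊕ M`. -/
noncomputable def prodCobra (ΔC : C →ₗ[k] C ⊗[k] C) (ΔM : M →ₗ[k] M ⊗[k] M)
    (h : M →ₗ[k] C ⊗[k] C) (ρ : M →ₗ[k] M ⊗[k] C) :
    (C × M) →ₗ[k] (C × M) ⊗[k] (C × M) :=
  TensorProduct.map (LinearMap.inl k C M) (LinearMap.inl k C M) ∘ₗ
      (ΔC ∘ₗ LinearMap.fst k C M + h ∘ₗ LinearMap.snd k C M)
    + TensorProduct.map (LinearMap.inr k C M) (LinearMap.inr k C M) ∘ₗ ΔM ∘ₗ LinearMap.snd k C M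
    + TensorProduct.map (LinearMap.inr k C M) (LinearMap.inl k C M) ∘ₗ ρ ∘ₗ LinearMap.snd k C M
    - TensorProduct.map (LinearMap.inl k C M) (LinearMap.inr k C M) ∘ₗ
        (TensorProduct.comm k M C).toLinearMap ∘ₗ ρ ∘ₗ LinearMap.snd k C M

/-- The operator `R_φ` on `C ⊕ M`. -/
def prodRB (RC : C →ₗ[k] C) (RM : M →ₗ[k] M) (φ : M →ₗ[k] C) :
    (C × M) →ₗ[k] (C × M) :=
  LinearMap.inl k C M ∘ₗ (RC ∘ₗ LinearMap.fst k C M + φ ∘ₗ LinearMap.snd k C M)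
    + LinearMap.inr k C M ∘ₗ RM ∘ₗ LinearMap.snd k C M

/-- `(α,β)` is extensible with respect to the non-abelian extension
`0 → C →f E →g M → 0`. -/
def Extensible (ΔE : E →ₗ[k] E ⊗[k] E) (RE : E →ₗ[k] E)
    (f : C →ₗ[k] E) (g : E →ₗ[k] M) (α : C →ₗ[k] C) (β : M →ₗ[k] M) : Prop :=
  ∃ γ : E →ₗ[k] E, IsHom ΔE RE ΔE RE γ ∧ Function.Bijective γ ∧
    Submodule.map γ (LinearMap.range f) = LinearMap.range f ∧
    γ ∘ₗ f = f ∘ₗ α ∧ g ∘ₗ γ = β ∘ₗ g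

/-- `(h', ρ', φ')` differs from `(h, ρ, φ)` by the equivalence move associated to
the linear map `s : M → C`. -/
def EquivVia (ΔC : C →ₗ[k] C ⊗[k] C) (RC : C →ₗ[k] C)
    (ΔM : M →ₗ[k] M ⊗[k] M) (RM : M →ₗ[k] M) (s : M →ₗ[k] C)
    (h : M →ₗ[k] C ⊗[k] C) (ρ : M →ₗ[k] M ⊗[k] C) (φ : M →ₗ[k] C)
    (h' : M →ₗ[k] C ⊗[k] C) (ρ' : M →ₗ[k] M ⊗[k] C) (φ' : M →ₗ[k] C) : Prop :=
  h' - h = TensorProduct.map s (LinearMap.id : C →ₗ[k] C) ∘ₗ ρ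
      - (TensorProduct.comm k C C).toLinearMap ∘ₗ
          TensorProduct.map s (LinearMap.id : C →ₗ[k] C) ∘ₗ ρ
      + TensorProduct.map s s ∘ₗ ΔM - ΔC ∘ₗ s ∧
  ρ' - ρ = lTensor M s ∘ₗ ΔM ∧
  φ' - φ = s ∘ₗ RM - RC ∘ₗ s

/-- Two non-abelian 2-cocycles are equivalent. -/
def CocEquiv (ΔC : C →ₗ[k] C ⊗[k] C) (RC : C →ₗ[k] C)
    (ΔM : M →ₗ[k] M ⊗[k] M) (RM : M →ₗ[k] M)
    (h : M →ₗ[k] C ⊗[k] C) (ρ : M →ₗ[k] M ⊗[k] C) (φ : M →ₗ[k] C)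
    (h' : M →ₗ[k] C ⊗[k] C) (ρ' : M →ₗ[k] M ⊗[k] C) (φ' : M →ₗ[k] C) : Prop :=
  ∃ s : M →ₗ[k] C, EquivVia ΔC RC ΔM RM s h ρ φ h' ρ' φ'

/-!
Automorphisms of `E` and retractions of the extension carry the same information. Replacing a
retraction `t` by `t - s ∘ g` changes the induced 2-cocycle by exactly the equivalence move of `s`.
On the other hand, a bijection `γ` of `E` over `β` that restricts to `α` on `C` transports `t` to
the retraction `t'` with `t' ∘ γ = α ∘ t`, and in the coordinates `(t, g)` on the source and
`(t', g)` on the target, `γ` becomes `α × β`. So `γ` is a homomorphism if and only if `t'` induces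
the twisted cocycle `(h_{(α,β)}, ρ_{(α,β)}, φ_{(α,β)})`: the components of `Δ_E` in these
coordinates are `Δ_C`, `Δ_M`, `h`, `ρ` and, by co-antisymmetry, `-τρ`. Hence `(α, β)` is extensible
if and only if some `t - s ∘ g` induces the twisted cocycle, which is the asserted equivalence.
-/

section CommSemiring

variable {R : Type*} [CommSemiring R]
variable {X : Type*} [AddCommMonoid X] [Module R X]
variable {C : Type*} [AddCommMonoid C] [Module R C]
variable {M : Type*} [AddCommMonoid M] [Module R M]
variable {E : Type*} [AddCommMonoid E] [Module R E]

theorem map_comp_add_map_comp_eq_of_split {p : E →ₗ[R] C} {q : E →ₗ[R] M}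
    {i : C →ₗ[R] E} {j : M →ₗ[R] E} (hsplit : i ∘ₗ p + j ∘ₗ q = LinearMap.id)
    (Δ : X →ₗ[R] E ⊗[R] E) :
    map i i ∘ₗ map p p ∘ₗ Δ + map i j ∘ₗ map p q ∘ₗ Δ
      + (map j i ∘ₗ map q p ∘ₗ Δ + map j j ∘ₗ map q q ∘ₗ Δ) = Δ := by
  simp only [← LinearMap.comp_assoc, ← map_comp, ← LinearMap.add_comp, ← map_add_right,
    ← map_add_left, hsplit, map_id, LinearMap.id_comp]

theorem exists_split_of_bijective_prod {p : E →ₗ[R] C} {q : E →ₗ[R] M}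
    (hpq : Function.Bijective (p.prod q)) :
    ∃ (i : C →ₗ[R] E) (j : M →ₗ[R] E), i ∘ₗ p + j ∘ₗ q = LinearMap.id := by
  let e := LinearEquiv.ofBijective (p.prod q) hpq
  refine ⟨e.symm ∘ₗ inl R C M, e.symm ∘ₗ inr R C M, LinearMap.ext fun x => ?_⟩
  calc e.symm (p x, 0) + e.symm (0, q x) = e.symm (p x, q x) := by simp [← map_add]
    _ = x := e.symm_apply_apply x

theorem exists_bijective_lift_of_bijective_prod {C' M' E' : Type*}
    [AddCommMonoid C'] [AddCommMonoid M'] [AddCommMonoid E'] [Module R C'] [Module R M']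
    [Module R E'] {p : E →ₗ[R] C} {q : E →ₗ[R] M} {p' : E' →ₗ[R] C'} {q' : E' →ₗ[R] M'}
    (hpq : Function.Bijective (p.prod q)) (hpq' : Function.Bijective (p'.prod q'))
    {α : C →ₗ[R] C'} {β : M →ₗ[R] M'} (hα : Function.Bijective α) (hβ : Function.Bijective β) :
    ∃ γ : E →ₗ[R] E', Function.Bijective γ ∧ p' ∘ₗ γ = α ∘ₗ p ∧ q' ∘ₗ γ = β ∘ₗ q := by
  let e := LinearEquiv.ofBijective (p.prod q) hpq
  let e' := LinearEquiv.ofBijective (p'.prod q') hpq'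
  let γ := e.trans ((LinearEquiv.ofBijective (α.prodMap β) (hα.prodMap hβ)).trans e'.symm)
  have hγ (x : E) : (p' (γ x), q' (γ x)) = (α (p x), β (q x)) := e'.apply_symm_apply _
  exact ⟨γ, γ.bijective, LinearMap.ext fun x => congrArg Prod.fst (hγ x),
    LinearMap.ext fun x => congrArg Prod.snd (hγ x)⟩

end CommSemiring

section CommRing

variable {R : Type*} [CommRing R]
variable {X : Type*} [AddCommGroup X] [Module R X]
variable {C : Type*} [AddCommGroup C] [Module R C]
variable {M : Type*} [AddCommGroup M] [Module R M]
variable {E : Type*} [AddCommGroup E] [Module R E]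

theorem map_comp_eq_neg_comm_comp_map_swap {Δ : X →ₗ[R] E ⊗[R] E}
    (hΔ : Δ = -((TensorProduct.comm R E E).toLinearMap ∘ₗ Δ))
    (u : E →ₗ[R] C) (v : E →ₗ[R] M) :
    map u v ∘ₗ Δ = -((TensorProduct.comm R M C).toLinearMap ∘ₗ map v u ∘ₗ Δ) := by
  conv_lhs => rw [hΔ, LinearMap.comp_neg, ← LinearMap.comp_assoc, map_comp_comm_eq]
  rw [LinearMap.comp_assoc]

theorem eq_of_map_comp_eq_of_antisymm {t : E →ₗ[R] C} {g : E →ₗ[R] M}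
    (hbij : Function.Bijective (t.prod g)) {Δ₁ Δ₂ : X →ₗ[R] E ⊗[R] E}
    (hΔ₁ : Δ₁ = -((TensorProduct.comm R E E).toLinearMap ∘ₗ Δ₁))
    (hΔ₂ : Δ₂ = -((TensorProduct.comm R E E).toLinearMap ∘ₗ Δ₂))
    (htt : map t t ∘ₗ Δ₁ = map t t ∘ₗ Δ₂) (hgt : map g t ∘ₗ Δ₁ = map g t ∘ₗ Δ₂)
    (hgg : map g g ∘ₗ Δ₁ = map g g ∘ₗ Δ₂) : Δ₁ = Δ₂ := by
  obtain ⟨i, j, hsplit⟩ := exists_split_of_bijective_prod hbij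
  have htg : map t g ∘ₗ Δ₁ = map t g ∘ₗ Δ₂ := by
    rw [map_comp_eq_neg_comm_comp_map_swap hΔ₁, map_comp_eq_neg_comm_comp_map_swap hΔ₂, hgt]
  rw [← map_comp_add_map_comp_eq_of_split hsplit Δ₁, htt, htg, hgt, hgg,
    map_comp_add_map_comp_eq_of_split hsplit]

theorem bijective_prod_of_retraction {f : C →ₗ[R] E} {g : E →ₗ[R] M}
    (hfg : Function.Exact f g) (hg : Function.Surjective g)
    {t : E →ₗ[R] C} (ht : t ∘ₗ f = LinearMap.id) : Function.Bijective (t.prod g) :=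
  (hfg.splitInjectiveEquiv hg ⟨t, ht⟩).1.bijective

theorem comp_eq_iff_sub_eq_of_surjective {g : E →ₗ[R] M} (hg : Function.Surjective g)
    {u u' d : M →ₗ[R] X} {v : E →ₗ[R] X} (hu : u ∘ₗ g = v + d ∘ₗ g) :
    u' ∘ₗ g = v ↔ u - u' = d := by
  rw [← cancel_right hg (f := u - u'), LinearMap.sub_comp, hu, sub_eq_iff_eq_add', add_left_inj,
    eq_comm]

/-- `(h, ρ, φ)` is the non-abelian 2-cocycle which the linear map `t : E → C` induces on the
quotient `g : E → M`. The fields are composed with `g`, so for surjective `g` they determine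
`(h, ρ, φ)`; that `t` be a retraction is not part of the notion. -/
structure IsInducedCocycle (ΔC : C →ₗ[R] C ⊗[R] C) (RC : C →ₗ[R] C)
    (ΔE : E →ₗ[R] E ⊗[R] E) (RE : E →ₗ[R] E) (g : E →ₗ[R] M) (t : E →ₗ[R] C)
    (h : M →ₗ[R] C ⊗[R] C) (ρ : M →ₗ[R] M ⊗[R] C) (φ : M →ₗ[R] C) : Prop where
  cobracket : h ∘ₗ g = map t t ∘ₗ ΔE - ΔC ∘ₗ t
  coaction : ρ ∘ₗ g = map g t ∘ₗ ΔE
  operator : φ ∘ₗ g = t ∘ₗ RE - RC ∘ₗ t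

variable {ΔC : C →ₗ[R] C ⊗[R] C} {RC : C →ₗ[R] C} {ΔM : M →ₗ[R] M ⊗[R] M} {RM : M →ₗ[R] M}
variable {ΔE : E →ₗ[R] E ⊗[R] E} {RE : E →ₗ[R] E} {g : E →ₗ[R] M}
variable {h h' : M →ₗ[R] C ⊗[R] C} {ρ ρ' : M →ₗ[R] M ⊗[R] C} {φ φ' : M →ₗ[R] C}

section ChangeOfRetraction

variable {t t' : E →ₗ[R] C} {s : M →ₗ[R] C}

theorem map_add_comp_right (hgΔ : map g g ∘ₗ ΔE = ΔM ∘ₗ g) (t : E →ₗ[R] C) (s : M →ₗ[R] C) :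
    map g (t + s ∘ₗ g) ∘ₗ ΔE = map g t ∘ₗ ΔE + (lTensor M s ∘ₗ ΔM) ∘ₗ g := by
  rw [map_add_right, LinearMap.add_comp, LinearMap.comp_assoc, ← hgΔ, ← LinearMap.comp_assoc,
    lTensor_comp_map]

theorem map_add_comp_self (hΔE : ΔE = -((TensorProduct.comm R E E).toLinearMap ∘ₗ ΔE))
    (hgΔ : map g g ∘ₗ ΔE = ΔM ∘ₗ g) (hρ : ρ ∘ₗ g = map g t ∘ₗ ΔE) (s : M →ₗ[R] C) :
    map (t + s ∘ₗ g) (t + s ∘ₗ g) ∘ₗ ΔE = map t t ∘ₗ ΔE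
      + (map s LinearMap.id ∘ₗ ρ - (TensorProduct.comm R C C).toLinearMap ∘ₗ
          map s LinearMap.id ∘ₗ ρ + map s s ∘ₗ ΔM) ∘ₗ g := by
  have hst : map (s ∘ₗ g) t ∘ₗ ΔE = map s LinearMap.id ∘ₗ ρ ∘ₗ g := by
    rw [hρ, ← LinearMap.comp_assoc, ← map_comp, LinearMap.id_comp]
  have hts : map t (s ∘ₗ g) ∘ₗ ΔE
      = -((TensorProduct.comm R C C).toLinearMap ∘ₗ map s LinearMap.id ∘ₗ ρ ∘ₗ g) := by
    rw [map_comp_eq_neg_comm_comp_map_swap hΔE, hst]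
  have hss : map (s ∘ₗ g) (s ∘ₗ g) ∘ₗ ΔE = map s s ∘ₗ ΔM ∘ₗ g := by
    rw [map_comp, LinearMap.comp_assoc, hgΔ]
  simp only [map_add_left, map_add_right, LinearMap.add_comp, LinearMap.sub_comp,
    LinearMap.comp_assoc, hst, hts, hss]
  abel

theorem isInducedCocycle_iff_of_eq_add
    (hΔE : ΔE = -((TensorProduct.comm R E E).toLinearMap ∘ₗ ΔE))
    (hgΔ : map g g ∘ₗ ΔE = ΔM ∘ₗ g) (hgR : RM ∘ₗ g = g ∘ₗ RE) (hg : Function.Surjective g)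
    (hind : IsInducedCocycle ΔC RC ΔE RE g t h ρ φ) (ht : t = t' + s ∘ₗ g) :
    IsInducedCocycle ΔC RC ΔE RE g t' h' ρ' φ' ↔
      h - h' = map s LinearMap.id ∘ₗ ρ'
          - (TensorProduct.comm R C C).toLinearMap ∘ₗ map s LinearMap.id ∘ₗ ρ'
          + map s s ∘ₗ ΔM - ΔC ∘ₗ s ∧
        ρ - ρ' = lTensor M s ∘ₗ ΔM ∧ φ - φ' = s ∘ₗ RM - RC ∘ₗ s := by
  subst ht
  have coaction_iff : ρ' ∘ₗ g = map g t' ∘ₗ ΔE ↔ ρ - ρ' = lTensor M s ∘ₗ ΔM :=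
    comp_eq_iff_sub_eq_of_surjective hg (hind.coaction.trans (map_add_comp_right hgΔ t' s))
  have operator_iff : φ' ∘ₗ g = t' ∘ₗ RE - RC ∘ₗ t' ↔ φ - φ' = s ∘ₗ RM - RC ∘ₗ s := by
    refine comp_eq_iff_sub_eq_of_surjective hg ?_
    rw [hind.operator, LinearMap.add_comp, LinearMap.comp_add, LinearMap.sub_comp,
      LinearMap.comp_assoc, LinearMap.comp_assoc, LinearMap.comp_assoc, hgR, add_sub_add_comm]
  have cobracket_iff (hρ' : ρ' ∘ₗ g = map g t' ∘ₗ ΔE) :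
      h' ∘ₗ g = map t' t' ∘ₗ ΔE - ΔC ∘ₗ t' ↔ h - h' = map s LinearMap.id ∘ₗ ρ'
        - (TensorProduct.comm R C C).toLinearMap ∘ₗ map s LinearMap.id ∘ₗ ρ'
        + map s s ∘ₗ ΔM - ΔC ∘ₗ s := by
    refine comp_eq_iff_sub_eq_of_surjective hg ?_
    rw [hind.cobracket, map_add_comp_self hΔE hgΔ hρ', LinearMap.comp_add, add_sub_add_comm,
      LinearMap.sub_comp g _ (ΔC ∘ₗ s), LinearMap.comp_assoc g s]
  constructor
  · rintro ⟨hh', hρ', hφ'⟩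
    exact ⟨(cobracket_iff hρ').1 hh', coaction_iff.1 hρ', operator_iff.1 hφ'⟩
  · rintro ⟨hh', hρ', hφ'⟩
    exact ⟨(cobracket_iff (coaction_iff.2 hρ')).2 hh', coaction_iff.2 hρ', operator_iff.2 hφ'⟩

end ChangeOfRetraction

section Transport

variable {t t' : E →ₗ[R] C} {α : C →ₗ[R] C} {β β' : M →ₗ[R] M} {γ : E →ₗ[R] E}

theorem comp_comp_comp_of_leftInverse (hβ' : β' ∘ₗ β = LinearMap.id)
    (hgγ : g ∘ₗ γ = β ∘ₗ g) (u : M →ₗ[R] X) : ((u ∘ₗ β') ∘ₗ g) ∘ₗ γ = u ∘ₗ g := by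
  rw [LinearMap.comp_assoc, hgγ, ← LinearMap.comp_assoc, LinearMap.comp_assoc β, hβ',
    LinearMap.comp_id]

theorem map_self_comp_eq_iff_cobracket (hh : h ∘ₗ g = map t t ∘ₗ ΔE - ΔC ∘ₗ t)
    (hα : map α α ∘ₗ ΔC = ΔC ∘ₗ α) (hβ' : β' ∘ₗ β = LinearMap.id)
    (hγ : Function.Surjective γ) (htγ : t' ∘ₗ γ = α ∘ₗ t) (hgγ : g ∘ₗ γ = β ∘ₗ g) :
    map t' t' ∘ₗ map γ γ ∘ₗ ΔE = map t' t' ∘ₗ ΔE ∘ₗ γ ↔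
      (map α α ∘ₗ h ∘ₗ β') ∘ₗ g = map t' t' ∘ₗ ΔE - ΔC ∘ₗ t' := by
  have hγγ : map t' t' ∘ₗ map γ γ ∘ₗ ΔE
      = ((map α α ∘ₗ h ∘ₗ β') ∘ₗ g + ΔC ∘ₗ t') ∘ₗ γ := by
    calc map t' t' ∘ₗ map γ γ ∘ₗ ΔE = map α α ∘ₗ map t t ∘ₗ ΔE := by
          simp only [← LinearMap.comp_assoc, ← map_comp, htγ]
      _ = map α α ∘ₗ (h ∘ₗ g + ΔC ∘ₗ t) := by rw [hh, sub_add_cancel]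
      _ = (map α α ∘ₗ h) ∘ₗ g + ΔC ∘ₗ t' ∘ₗ γ := by
          rw [LinearMap.comp_add, htγ, ← LinearMap.comp_assoc t, hα, LinearMap.comp_assoc,
            LinearMap.comp_assoc]
      _ = ((map α α ∘ₗ h ∘ₗ β') ∘ₗ g + ΔC ∘ₗ t') ∘ₗ γ := by
          rw [LinearMap.add_comp, ← LinearMap.comp_assoc β', comp_comp_comp_of_leftInverse hβ' hgγ,
            LinearMap.comp_assoc γ t']
  rw [hγγ, eq_sub_iff_add_eq, ← LinearMap.comp_assoc γ, cancel_right hγ]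

theorem map_comp_eq_iff_coaction (hρ : ρ ∘ₗ g = map g t ∘ₗ ΔE) (hβ' : β' ∘ₗ β = LinearMap.id)
    (hγ : Function.Surjective γ) (htγ : t' ∘ₗ γ = α ∘ₗ t) (hgγ : g ∘ₗ γ = β ∘ₗ g) :
    map g t' ∘ₗ map γ γ ∘ₗ ΔE = map g t' ∘ₗ ΔE ∘ₗ γ ↔
      (map β α ∘ₗ ρ ∘ₗ β') ∘ₗ g = map g t' ∘ₗ ΔE := by
  have hγγ : map g t' ∘ₗ map γ γ ∘ₗ ΔE = ((map β α ∘ₗ ρ ∘ₗ β') ∘ₗ g) ∘ₗ γ := by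
    calc map g t' ∘ₗ map γ γ ∘ₗ ΔE = map β α ∘ₗ map g t ∘ₗ ΔE := by
          simp only [← LinearMap.comp_assoc, ← map_comp, htγ, hgγ]
      _ = (map β α ∘ₗ ρ) ∘ₗ g := by rw [← hρ, LinearMap.comp_assoc]
      _ = ((map β α ∘ₗ ρ ∘ₗ β') ∘ₗ g) ∘ₗ γ := by
          rw [← LinearMap.comp_assoc β', comp_comp_comp_of_leftInverse hβ' hgγ]
  rw [hγγ, ← LinearMap.comp_assoc γ, cancel_right hγ]

theorem comp_eq_iff_operator (hφ : φ ∘ₗ g = t ∘ₗ RE - RC ∘ₗ t)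
    (hα : RC ∘ₗ α = α ∘ₗ RC) (hβ' : β' ∘ₗ β = LinearMap.id)
    (hγ : Function.Surjective γ) (htγ : t' ∘ₗ γ = α ∘ₗ t) (hgγ : g ∘ₗ γ = β ∘ₗ g) :
    t' ∘ₗ γ ∘ₗ RE = t' ∘ₗ RE ∘ₗ γ ↔
      (α ∘ₗ φ ∘ₗ β') ∘ₗ g = t' ∘ₗ RE - RC ∘ₗ t' := by
  have hγR : t' ∘ₗ γ ∘ₗ RE = ((α ∘ₗ φ ∘ₗ β') ∘ₗ g + RC ∘ₗ t') ∘ₗ γ := by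
    calc t' ∘ₗ γ ∘ₗ RE = α ∘ₗ t ∘ₗ RE := by
          rw [← LinearMap.comp_assoc, htγ, LinearMap.comp_assoc]
      _ = α ∘ₗ (φ ∘ₗ g + RC ∘ₗ t) := by rw [hφ, sub_add_cancel]
      _ = (α ∘ₗ φ) ∘ₗ g + RC ∘ₗ t' ∘ₗ γ := by
          rw [LinearMap.comp_add, htγ, ← LinearMap.comp_assoc t, ← hα, LinearMap.comp_assoc,
            LinearMap.comp_assoc]
      _ = ((α ∘ₗ φ ∘ₗ β') ∘ₗ g + RC ∘ₗ t') ∘ₗ γ := by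
          rw [LinearMap.add_comp, ← LinearMap.comp_assoc β', comp_comp_comp_of_leftInverse hβ' hgγ,
            LinearMap.comp_assoc γ t']
  rw [hγR, eq_sub_iff_add_eq, ← LinearMap.comp_assoc γ, cancel_right hγ]

theorem map_self_comp_map_comp_eq (hgΔ : map g g ∘ₗ ΔE = ΔM ∘ₗ g)
    (hβ : map β β ∘ₗ ΔM = ΔM ∘ₗ β) (hgγ : g ∘ₗ γ = β ∘ₗ g) :
    map g g ∘ₗ map γ γ ∘ₗ ΔE = map g g ∘ₗ ΔE ∘ₗ γ :=
  calc map g g ∘ₗ map γ γ ∘ₗ ΔE = map β β ∘ₗ map g g ∘ₗ ΔE := by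
        simp only [← LinearMap.comp_assoc, ← map_comp, hgγ]
    _ = ΔM ∘ₗ g ∘ₗ γ := by rw [hgΔ, hgγ, ← LinearMap.comp_assoc, hβ, LinearMap.comp_assoc]
    _ = map g g ∘ₗ ΔE ∘ₗ γ := by rw [← LinearMap.comp_assoc, ← hgΔ, LinearMap.comp_assoc]

theorem comp_comp_eq_of_intertwine (hgR : RM ∘ₗ g = g ∘ₗ RE) (hβ : RM ∘ₗ β = β ∘ₗ RM)
    (hgγ : g ∘ₗ γ = β ∘ₗ g) : g ∘ₗ γ ∘ₗ RE = g ∘ₗ RE ∘ₗ γ :=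
  calc g ∘ₗ γ ∘ₗ RE = β ∘ₗ RM ∘ₗ g := by
        rw [← LinearMap.comp_assoc, hgγ, LinearMap.comp_assoc, hgR]
    _ = RM ∘ₗ g ∘ₗ γ := by rw [← LinearMap.comp_assoc, ← hβ, LinearMap.comp_assoc, hgγ]
    _ = g ∘ₗ RE ∘ₗ γ := by rw [← LinearMap.comp_assoc, hgR, LinearMap.comp_assoc]

theorem hom_iff_isInducedCocycle
    (hΔE : ΔE = -((TensorProduct.comm R E E).toLinearMap ∘ₗ ΔE))
    (hgΔ : map g g ∘ₗ ΔE = ΔM ∘ₗ g) (hgR : RM ∘ₗ g = g ∘ₗ RE)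
    (hbij : Function.Bijective (t'.prod g)) (hind : IsInducedCocycle ΔC RC ΔE RE g t h ρ φ)
    (hαΔ : map α α ∘ₗ ΔC = ΔC ∘ₗ α) (hαR : RC ∘ₗ α = α ∘ₗ RC)
    (hβΔ : map β β ∘ₗ ΔM = ΔM ∘ₗ β) (hβR : RM ∘ₗ β = β ∘ₗ RM) (hβ' : β' ∘ₗ β = LinearMap.id)
    (hγ : Function.Surjective γ) (htγ : t' ∘ₗ γ = α ∘ₗ t) (hgγ : g ∘ₗ γ = β ∘ₗ g) :
    map γ γ ∘ₗ ΔE = ΔE ∘ₗ γ ∧ RE ∘ₗ γ = γ ∘ₗ RE ↔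
      IsInducedCocycle ΔC RC ΔE RE g t'
        (map α α ∘ₗ h ∘ₗ β') (map β α ∘ₗ ρ ∘ₗ β') (α ∘ₗ φ ∘ₗ β') := by
  have cobracket_iff := map_self_comp_eq_iff_cobracket hind.cobracket hαΔ hβ' hγ htγ hgγ
  have coaction_iff := map_comp_eq_iff_coaction hind.coaction hβ' hγ htγ hgγ
  have operator_iff := comp_eq_iff_operator hind.operator hαR hβ' hγ htγ hgγ
  constructor
  · rintro ⟨hΔ, hR⟩
    exact ⟨cobracket_iff.1 (by rw [hΔ]), coaction_iff.1 (by rw [hΔ]), operator_iff.1 (by rw [hR])⟩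
  · rintro ⟨hh', hρ', hφ'⟩
    have hΔEγ : ΔE ∘ₗ γ = -((TensorProduct.comm R E E).toLinearMap ∘ₗ ΔE ∘ₗ γ) := by
      conv_lhs => rw [hΔE, LinearMap.neg_comp, LinearMap.comp_assoc]
    refine ⟨eq_of_map_comp_eq_of_antisymm hbij
      (map_comp_eq_neg_comm_comp_map_swap hΔE γ γ) hΔEγ
      (cobracket_iff.2 hh') (coaction_iff.2 hρ') (map_self_comp_map_comp_eq hgΔ hβΔ hgγ), ?_⟩
    have ht'R : t' ∘ₗ γ ∘ₗ RE = t' ∘ₗ RE ∘ₗ γ := operator_iff.2 hφ'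
    have hgR' : g ∘ₗ γ ∘ₗ RE = g ∘ₗ RE ∘ₗ γ := comp_comp_eq_of_intertwine hgR hβR hgγ
    exact LinearMap.ext fun x => hbij.injective <|
      Prod.ext (LinearMap.congr_fun ht'R.symm x) (LinearMap.congr_fun hgR'.symm x)

theorem comp_eq_comp_of_retraction {f : C →ₗ[R] E} (hfg : Function.Exact f g)
    (ht : t ∘ₗ f = LinearMap.id) (ht' : t' ∘ₗ f = LinearMap.id)
    (hbij : Function.Bijective (t'.prod g)) (htγ : t' ∘ₗ γ = α ∘ₗ t) (hgγ : g ∘ₗ γ = β ∘ₗ g) :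
    γ ∘ₗ f = f ∘ₗ α := by
  have hgf := hfg.linearMap_comp_eq_zero
  have ht'γf : t' ∘ₗ γ ∘ₗ f = t' ∘ₗ f ∘ₗ α := by
    rw [← LinearMap.comp_assoc, htγ, LinearMap.comp_assoc, ht, ← LinearMap.comp_assoc, ht',
      LinearMap.comp_id, LinearMap.id_comp]
  have hgγf : g ∘ₗ γ ∘ₗ f = g ∘ₗ f ∘ₗ α := by
    rw [← LinearMap.comp_assoc, hgγ, LinearMap.comp_assoc, hgf, ← LinearMap.comp_assoc, hgf,
      LinearMap.comp_zero, LinearMap.zero_comp]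
  exact LinearMap.ext fun c => hbij.injective <|
    Prod.ext (LinearMap.congr_fun ht'γf c) (LinearMap.congr_fun hgγf c)

theorem exists_sub_comp_comp_eq {f : C →ₗ[R] E} (hfg : Function.Exact f g)
    (hg : Function.Surjective g) (ht : t ∘ₗ f = LinearMap.id) (hβ' : β' ∘ₗ β = LinearMap.id)
    (hγf : γ ∘ₗ f = f ∘ₗ α) (hgγ : g ∘ₗ γ = β ∘ₗ g) :
    ∃ s : M →ₗ[R] C, (t - s ∘ₗ g) ∘ₗ γ = α ∘ₗ t := by
  have hf : (t ∘ₗ γ - α ∘ₗ t) ∘ₗ f = 0 := by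
    rw [LinearMap.sub_comp, LinearMap.comp_assoc, hγf, ← LinearMap.comp_assoc, ht,
      LinearMap.comp_assoc, ht, LinearMap.id_comp, LinearMap.comp_id, sub_self]
  obtain ⟨r, hr⟩ : ∃ r : M →ₗ[R] C, r ∘ₗ g = t ∘ₗ γ - α ∘ₗ t :=
    (exact_lcomp_of_exact_of_surjective C hfg hg (t ∘ₗ γ - α ∘ₗ t)).1 hf
  refine ⟨r ∘ₗ β', ?_⟩
  rw [LinearMap.sub_comp, comp_comp_comp_of_leftInverse hβ' hgγ, hr, sub_sub_cancel]

end Transport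

theorem stmt14_general (hΔE : ΔE = -((TensorProduct.comm R E E).toLinearMap ∘ₗ ΔE))
    {f : C →ₗ[R] E} (hgΔ : map g g ∘ₗ ΔE = ΔM ∘ₗ g) (hgR : RM ∘ₗ g = g ∘ₗ RE)
    (hg : Function.Surjective g) (hfg : Function.Exact f g)
    {t : E →ₗ[R] C} (ht : t ∘ₗ f = LinearMap.id)
    (hind : IsInducedCocycle ΔC RC ΔE RE g t h ρ φ)
    {α : C →ₗ[R] C} (hαΔ : map α α ∘ₗ ΔC = ΔC ∘ₗ α) (hαR : RC ∘ₗ α = α ∘ₗ RC)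
    (hα : Function.Bijective α) {β β' : M →ₗ[R] M}
    (hβΔ : map β β ∘ₗ ΔM = ΔM ∘ₗ β) (hβR : RM ∘ₗ β = β ∘ₗ RM)
    (hββ' : β ∘ₗ β' = LinearMap.id) (hβ'β : β' ∘ₗ β = LinearMap.id) :
    (∃ γ : E →ₗ[R] E, (map γ γ ∘ₗ ΔE = ΔE ∘ₗ γ ∧ RE ∘ₗ γ = γ ∘ₗ RE) ∧ Function.Bijective γ ∧
        Submodule.map γ (LinearMap.range f) = LinearMap.range f ∧
        γ ∘ₗ f = f ∘ₗ α ∧ g ∘ₗ γ = β ∘ₗ g) ↔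
      ∃ s : M →ₗ[R] C,
        h - map α α ∘ₗ h ∘ₗ β' = map s LinearMap.id ∘ₗ map β α ∘ₗ ρ ∘ₗ β'
            - (TensorProduct.comm R C C).toLinearMap ∘ₗ
                map s LinearMap.id ∘ₗ map β α ∘ₗ ρ ∘ₗ β'
            + map s s ∘ₗ ΔM - ΔC ∘ₗ s ∧
          ρ - map β α ∘ₗ ρ ∘ₗ β' = lTensor M s ∘ₗ ΔM ∧
          φ - α ∘ₗ φ ∘ₗ β' = s ∘ₗ RM - RC ∘ₗ s := by
  have retraction_sub (s : M →ₗ[R] C) : (t - s ∘ₗ g) ∘ₗ f = LinearMap.id := by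
    rw [LinearMap.sub_comp, ht, LinearMap.comp_assoc, hfg.linearMap_comp_eq_zero,
      LinearMap.comp_zero, sub_zero]
  have bijective_sub (s : M →ₗ[R] C) := bijective_prod_of_retraction hfg hg (retraction_sub s)
  have equiv_iff (s : M →ₗ[R] C) := isInducedCocycle_iff_of_eq_add hΔE hgΔ hgR hg hind
    (sub_add_cancel t (s ∘ₗ g)).symm (h' := map α α ∘ₗ h ∘ₗ β') (ρ' := map β α ∘ₗ ρ ∘ₗ β')
    (φ' := α ∘ₗ φ ∘ₗ β')
  constructor
  · rintro ⟨γ, hγhom, hγ, -, hγf, hgγ⟩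
    obtain ⟨s, htγ⟩ := exists_sub_comp_comp_eq hfg hg ht hβ'β hγf hgγ
    exact ⟨s, (equiv_iff s).1 <| (hom_iff_isInducedCocycle hΔE hgΔ hgR (bijective_sub s) hind
      hαΔ hαR hβΔ hβR hβ'β hγ.surjective htγ hgγ).1 hγhom⟩
  · rintro ⟨s, hs⟩
    have hβ : Function.Bijective β := Function.bijective_iff_has_inverse.2
      ⟨β', LinearMap.congr_fun hβ'β, LinearMap.congr_fun hββ'⟩
    obtain ⟨γ, hγ, htγ, hgγ⟩ := exists_bijective_lift_of_bijective_prod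
      (bijective_prod_of_retraction hfg hg ht) (bijective_sub s) hα hβ
    have hγhom := (hom_iff_isInducedCocycle hΔE hgΔ hgR (bijective_sub s) hind
      hαΔ hαR hβΔ hβR hβ'β hγ.surjective htγ hgγ).2 ((equiv_iff s).2 hs)
    have hγf := comp_eq_comp_of_retraction hfg ht (retraction_sub s) (bijective_sub s) htγ hgγ
    refine ⟨γ, hγhom, hγ, ?_, hγf, hgγ⟩
    rw [← LinearMap.range_comp, hγf, LinearMap.range_comp, LinearMap.range_eq_top.2 hα.2,
      Submodule.map_top]

end CommRing

theorem stmt14 (lam : k) (ΔC : C →ₗ[k] C ⊗[k] C) (RC : C →ₗ[k] C)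
    (ΔM : M →ₗ[k] M ⊗[k] M) (RM : M →ₗ[k] M)
    (ΔE : E →ₗ[k] E ⊗[k] E) (RE : E →ₗ[k] E)
    (hC : IsRBLC lam ΔC RC) (hM : IsRBLC lam ΔM RM) (hE : IsRBLC lam ΔE RE)
    (f : C →ₗ[k] E) (g : E →ₗ[k] M)
    (homf : IsHom ΔC RC ΔE RE f) (homg : IsHom ΔE RE ΔM RM g)
    (injf : Function.Injective f) (surjg : Function.Surjective g)
    (hexact : LinearMap.range f = LinearMap.ker g)
    (t : E →ₗ[k] C) (ht : t ∘ₗ f = LinearMap.id)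
    (h : M →ₗ[k] C ⊗[k] C) (ρ : M →ₗ[k] M ⊗[k] C) (φ : M →ₗ[k] C)
    (hh : h ∘ₗ g = TensorProduct.map t t ∘ₗ ΔE - ΔC ∘ₗ t)
    (hρ : ρ ∘ₗ g = TensorProduct.map g t ∘ₗ ΔE)
    (hφ : φ ∘ₗ g = t ∘ₗ RE - RC ∘ₗ t)
    (α : C →ₗ[k] C) (β : M →ₗ[k] M)
    (homα : IsHom ΔC RC ΔC RC α) (bijα : Function.Bijective α)
    (homβ : IsHom ΔM RM ΔM RM β) (bijβ : Function.Bijective β)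
    (β' : M →ₗ[k] M) (hβ'₁ : β ∘ₗ β' = LinearMap.id) (hβ'₂ : β' ∘ₗ β = LinearMap.id) :
    Extensible ΔE RE f g α β ↔
      CocEquiv ΔC RC ΔM RM
        (TensorProduct.map α α ∘ₗ h ∘ₗ β')
        (TensorProduct.map β α ∘ₗ ρ ∘ₗ β')
        (α ∘ₗ φ ∘ₗ β')
        h ρ φ := by
  exact stmt14_general hE.1 homg.1 homg.2 surjg (LinearMap.exact_iff.2 hexact.symm) ht
    ⟨hh, hρ, hφ⟩ homα.1 homα.2 bijα homβ.1 homβ.2 hβ'₁ hβ'₂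

end
end

section
/- Let 0 → C →f E →g M → 0 be a non-abelian extension of λ-weighted Rota-Baxter Lie coalgebras, let t and t′ be two retractions with induced non-abelian 2-cocycles (h, ρ, φ) and (h′, ρ′, φ′), and let (α, β) ∈ Aut(C)×Aut(M). Then the linear map s : M → C given by s(g(e)) = t′(e) − t(e) is well defined and the twisted cocycles (h′_{(α,β)}, ρ′_{(α,β)}, φ′_{(α,β)}) and (h_{(α,β)}, ρ_{(α,β)}, φ_{(α,β)}) are equivalent via the linear map αsβ^{−1}; consequently the Wells map W(α,β) = [(h_{(α,β)}, ρ_{(α,β)}, φ_{(α,β)}) − (h, ρ, φ)] does not depend on the choice of retraction. -/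
open TensorProduct LinearMap

section

variable {k : Type*} [Field k]
variable {C : Type*} [AddCommGroup C] [Module k C]
variable {M : Type*} [AddCommGroup M] [Module k M]
variable {E : Type*} [AddCommGroup E] [Module k E]

/-- A pair of triples of structure maps, thought of as a formal difference of
non-abelian 2-cocycles. -/
def PairRel (ΔC : C →ₗ[k] C ⊗[k] C) (RC : C →ₗ[k] C)
    (ΔM : M →ₗ[k] M ⊗[k] M) (RM : M →ₗ[k] M)
    (p q : ((M →ₗ[k] C ⊗[k] C) × (M →ₗ[k] M ⊗[k] C) × (M →ₗ[k] C)) ×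
      ((M →ₗ[k] C ⊗[k] C) × (M →ₗ[k] M ⊗[k] C) × (M →ₗ[k] C))) : Prop :=
  CocEquiv ΔC RC ΔM RM p.1.1 p.1.2.1 p.1.2.2 q.1.1 q.1.2.1 q.1.2.2 ∧
  CocEquiv ΔC RC ΔM RM p.2.1 p.2.2.1 p.2.2.2 q.2.1 q.2.2.1 q.2.2.2

/-!
Composing a retraction `t` with `α` and the projection `g` with `β` turns the cocycle induced by
`t` into its twist by `(α, β)`. Twisted cocycles are thus induced cocycles along `βg`, and the
computation comparing the cocycles induced by `t` and `t'` along `g` also compares those induced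
by `αt` and `αt'` along `βg`. There the role of `s`, for which `sg = t' - t`, is played by `αsβ⁻¹`.
-/

variable {D : Type*} [AddCommGroup D] [Module k D]
variable {N : Type*} [AddCommGroup N] [Module k N]

theorem CoAnti.comm_comp_map_comp {ΔE : E →ₗ[k] E ⊗[k] E} (anti : CoAnti ΔE)
    (u : E →ₗ[k] C) (v : E →ₗ[k] D) :
    (TensorProduct.comm k C D).toLinearMap ∘ₗ TensorProduct.map u v ∘ₗ ΔE
      = -(TensorProduct.map v u ∘ₗ ΔE) := by
  have comm_comp : (TensorProduct.comm k E E).toLinearMap ∘ₗ ΔE = -ΔE :=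
    (neg_eq_iff_eq_neg.mpr anti).symm
  rw [← comp_assoc, ← TensorProduct.map_comp_comm_eq, comp_assoc, comm_comp, comp_neg]

theorem IsHom.comp {ΔE : E →ₗ[k] E ⊗[k] E} {RE : E →ₗ[k] E} {ΔM : M →ₗ[k] M ⊗[k] M}
    {RM : M →ₗ[k] M} {ΔN : N →ₗ[k] N ⊗[k] N} {RN : N →ₗ[k] N} {η : M →ₗ[k] N} {θ : E →ₗ[k] M}
    (homη : IsHom ΔM RM ΔN RN η) (homθ : IsHom ΔE RE ΔM RM θ) :
    IsHom ΔE RE ΔN RN (η ∘ₗ θ) := by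
  constructor
  · rw [TensorProduct.map_comp, comp_assoc, homθ.1, ← comp_assoc, homη.1, comp_assoc]
  · rw [← comp_assoc, homη.2, comp_assoc, homθ.2, comp_assoc]

theorem comp_comp_comp_comp_of_comp_eq_id {β : M →ₗ[k] N} {β' : N →ₗ[k] M}
    (hβ : β' ∘ₗ β = LinearMap.id) (g : E →ₗ[k] M) (x : M →ₗ[k] C) (α : C →ₗ[k] D) :
    (α ∘ₗ x ∘ₗ β') ∘ₗ β ∘ₗ g = α ∘ₗ x ∘ₗ g := by
  simp only [comp_assoc]
  rw [← comp_assoc g β β', hβ, id_comp]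

/-- The triple `(h, ρ, φ)` is induced by the linear map `t : E → C` along `g : E → M`. For an
extension with projection `g` and a retraction `t` this is the induced non-abelian 2-cocycle;
neither exactness nor the retraction property is part of the definition, so that it also covers
the pair `αt`, `βg`. -/
structure IsInducedCocycle_s15 (ΔC : C →ₗ[k] C ⊗[k] C) (RC : C →ₗ[k] C)
    (ΔE : E →ₗ[k] E ⊗[k] E) (RE : E →ₗ[k] E) (g : E →ₗ[k] M) (t : E →ₗ[k] C)
    (h : M →ₗ[k] C ⊗[k] C) (ρ : M →ₗ[k] M ⊗[k] C) (φ : M →ₗ[k] C) : Prop where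
  cobracket : h ∘ₗ g = TensorProduct.map t t ∘ₗ ΔE - ΔC ∘ₗ t
  coaction : ρ ∘ₗ g = TensorProduct.map g t ∘ₗ ΔE
  operator : φ ∘ₗ g = t ∘ₗ RE - RC ∘ₗ t

namespace IsInducedCocycle_s15

variable {ΔC : C →ₗ[k] C ⊗[k] C} {RC : C →ₗ[k] C} {ΔE : E →ₗ[k] E ⊗[k] E} {RE : E →ₗ[k] E}
  {g : E →ₗ[k] M} {t : E →ₗ[k] C}
  {h : M →ₗ[k] C ⊗[k] C} {ρ : M →ₗ[k] M ⊗[k] C} {φ : M →ₗ[k] C}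

theorem twist (H : IsInducedCocycle_s15 ΔC RC ΔE RE g t h ρ φ)
    {ΔD : D →ₗ[k] D ⊗[k] D} {RD : D →ₗ[k] D} {α : C →ₗ[k] D} (homα : IsHom ΔC RC ΔD RD α)
    {β : M →ₗ[k] N} {β' : N →ₗ[k] M} (hβ : β' ∘ₗ β = LinearMap.id) :
    IsInducedCocycle_s15 ΔD RD ΔE RE (β ∘ₗ g) (α ∘ₗ t)
      (TensorProduct.map α α ∘ₗ h ∘ₗ β') (TensorProduct.map β α ∘ₗ ρ ∘ₗ β') (α ∘ₗ φ ∘ₗ β') where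
  cobracket := by
    rw [comp_comp_comp_comp_of_comp_eq_id hβ, H.cobracket, comp_sub, ← comp_assoc, ← comp_assoc,
      homα.1, ← TensorProduct.map_comp, comp_assoc]
  coaction := by
    rw [comp_comp_comp_comp_of_comp_eq_id hβ, H.coaction, ← comp_assoc, ← TensorProduct.map_comp]
  operator := by
    rw [comp_comp_comp_comp_of_comp_eq_id hβ, H.operator, comp_sub, ← comp_assoc _ RC, ← homα.2]
    simp only [comp_assoc]

variable {ΔM : M →ₗ[k] M ⊗[k] M} {RM : M →ₗ[k] M} {t' : E →ₗ[k] C}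
  {h' : M →ₗ[k] C ⊗[k] C} {ρ' : M →ₗ[k] M ⊗[k] C} {φ' : M →ₗ[k] C}

theorem equivVia (H : IsInducedCocycle_s15 ΔC RC ΔE RE g t h ρ φ)
    (H' : IsInducedCocycle_s15 ΔC RC ΔE RE g t' h' ρ' φ') (anti : CoAnti ΔE)
    (homg : IsHom ΔE RE ΔM RM g) (surjg : Function.Surjective g)
    {s : M →ₗ[k] C} (hs : s ∘ₗ g = t' - t) :
    EquivVia ΔC RC ΔM RM s h ρ φ h' ρ' φ' := by
  obtain rfl : t' = t + s ∘ₗ g := by rw [hs, add_sub_cancel]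
  refine ⟨(cancel_right surjg).mp ?_, (cancel_right surjg).mp ?_, (cancel_right surjg).mp ?_⟩
  · have map_coaction : TensorProduct.map s LinearMap.id ∘ₗ ρ ∘ₗ g
        = TensorProduct.map (s ∘ₗ g) t ∘ₗ ΔE := by
      rw [H.coaction, ← comp_assoc, ← TensorProduct.map_comp, id_comp]
    have map_cobracket : TensorProduct.map s s ∘ₗ ΔM ∘ₗ g
        = TensorProduct.map (s ∘ₗ g) (s ∘ₗ g) ∘ₗ ΔE := by
      rw [← homg.1, ← comp_assoc, ← TensorProduct.map_comp]
    simp only [sub_comp, add_comp, comp_assoc]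
    rw [H.cobracket, H'.cobracket, map_coaction, map_cobracket, anti.comm_comp_map_comp]
    simp only [TensorProduct.map_add_left, TensorProduct.map_add_right, add_comp, comp_add]
    abel
  · rw [sub_comp, H.coaction, H'.coaction, comp_assoc, ← homg.1, ← comp_assoc, lTensor_comp_map,
      TensorProduct.map_add_right, add_comp, add_sub_cancel_left]
  · rw [sub_comp, H.operator, H'.operator, sub_comp, comp_assoc, homg.2]
    simp only [add_comp, comp_add, comp_assoc]
    abel

end IsInducedCocycle_s15

theorem stmt15_general (ΔC : C →ₗ[k] C ⊗[k] C) (RC : C →ₗ[k] C)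
    (ΔM : M →ₗ[k] M ⊗[k] M) (RM : M →ₗ[k] M)
    (ΔE : E →ₗ[k] E ⊗[k] E) (RE : E →ₗ[k] E) (anti : CoAnti ΔE)
    (f : D →ₗ[k] E) (g : E →ₗ[k] M) (homg : IsHom ΔE RE ΔM RM g)
    (surjg : Function.Surjective g) (hexact : Function.Exact f g)
    (t t' : E →ₗ[k] C) (htt' : t' ∘ₗ f = t ∘ₗ f)
    (h : M →ₗ[k] C ⊗[k] C) (ρ : M →ₗ[k] M ⊗[k] C) (φ : M →ₗ[k] C)
    (H : IsInducedCocycle_s15 ΔC RC ΔE RE g t h ρ φ)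
    (h' : M →ₗ[k] C ⊗[k] C) (ρ' : M →ₗ[k] M ⊗[k] C) (φ' : M →ₗ[k] C)
    (H' : IsInducedCocycle_s15 ΔC RC ΔE RE g t' h' ρ' φ')
    (α : C →ₗ[k] C) (β : M →ₗ[k] M)
    (homα : IsHom ΔC RC ΔC RC α) (homβ : IsHom ΔM RM ΔM RM β)
    (β' : M →ₗ[k] M) (hβ'₁ : β ∘ₗ β' = LinearMap.id) (hβ'₂ : β' ∘ₗ β = LinearMap.id) :
    (∀ e e' : E, g e = g e' → t' e - t e = t' e' - t e') ∧
    (∀ s : M →ₗ[k] C, s ∘ₗ g = t' - t →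
      EquivVia ΔC RC ΔM RM (α ∘ₗ s ∘ₗ β')
        (TensorProduct.map α α ∘ₗ h ∘ₗ β') (TensorProduct.map β α ∘ₗ ρ ∘ₗ β')
        (α ∘ₗ φ ∘ₗ β')
        (TensorProduct.map α α ∘ₗ h' ∘ₗ β') (TensorProduct.map β α ∘ₗ ρ' ∘ₗ β')
        (α ∘ₗ φ' ∘ₗ β')) ∧
    Quot.mk (PairRel ΔC RC ΔM RM)
        ((TensorProduct.map α α ∘ₗ h' ∘ₗ β', TensorProduct.map β α ∘ₗ ρ' ∘ₗ β',
            α ∘ₗ φ' ∘ₗ β'), (h', ρ', φ'))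
      = Quot.mk (PairRel ΔC RC ΔM RM)
        ((TensorProduct.map α α ∘ₗ h ∘ₗ β', TensorProduct.map β α ∘ₗ ρ ∘ₗ β',
            α ∘ₗ φ ∘ₗ β'), (h, ρ, φ)) := by
  have surjβ : Function.Surjective β := surjective_of_comp_eq_id β' β hβ'₁
  have equiv_twist (s : M →ₗ[k] C) (hs : s ∘ₗ g = t' - t) :=
    (H.twist homα hβ'₂).equivVia (s := α ∘ₗ s ∘ₗ β') (H'.twist homα hβ'₂) anti
      (homβ.comp homg) (surjβ.comp surjg)
      (by rw [comp_comp_comp_comp_of_comp_eq_id hβ'₂, hs, comp_sub])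
  obtain ⟨s, hs : s ∘ₗ g = t' - t⟩ :=
    (exact_lcomp_of_exact_of_surjective C hexact surjg (t' - t)).mp
      (by rw [lcomp_apply', sub_comp, htt', sub_self])
  refine ⟨fun e e' hee' ↦ ?_, equiv_twist, ?_⟩
  · rw [← LinearMap.sub_apply, ← LinearMap.sub_apply, ← hs, comp_apply, comp_apply, hee']
  · exact (Quot.sound ⟨⟨_, equiv_twist s hs⟩, ⟨s, H.equivVia H' anti homg surjg hs⟩⟩).symm

theorem stmt15 (lam : k) (ΔC : C →ₗ[k] C ⊗[k] C) (RC : C →ₗ[k] C)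
    (ΔM : M →ₗ[k] M ⊗[k] M) (RM : M →ₗ[k] M)
    (ΔE : E →ₗ[k] E ⊗[k] E) (RE : E →ₗ[k] E)
    (hC : IsRBLC lam ΔC RC) (hM : IsRBLC lam ΔM RM) (hE : IsRBLC lam ΔE RE)
    (f : C →ₗ[k] E) (g : E →ₗ[k] M)
    (homf : IsHom ΔC RC ΔE RE f) (homg : IsHom ΔE RE ΔM RM g)
    (injf : Function.Injective f) (surjg : Function.Surjective g)
    (hexact : LinearMap.range f = LinearMap.ker g)
    (t t' : E →ₗ[k] C) (ht : t ∘ₗ f = LinearMap.id) (ht' : t' ∘ₗ f = LinearMap.id)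
    (h : M →ₗ[k] C ⊗[k] C) (ρ : M →ₗ[k] M ⊗[k] C) (φ : M →ₗ[k] C)
    (hh : h ∘ₗ g = TensorProduct.map t t ∘ₗ ΔE - ΔC ∘ₗ t)
    (hρ : ρ ∘ₗ g = TensorProduct.map g t ∘ₗ ΔE)
    (hφ : φ ∘ₗ g = t ∘ₗ RE - RC ∘ₗ t)
    (h' : M →ₗ[k] C ⊗[k] C) (ρ' : M →ₗ[k] M ⊗[k] C) (φ' : M →ₗ[k] C)
    (hh' : h' ∘ₗ g = TensorProduct.map t' t' ∘ₗ ΔE - ΔC ∘ₗ t')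
    (hρ' : ρ' ∘ₗ g = TensorProduct.map g t' ∘ₗ ΔE)
    (hφ' : φ' ∘ₗ g = t' ∘ₗ RE - RC ∘ₗ t')
    (α : C →ₗ[k] C) (β : M →ₗ[k] M)
    (homα : IsHom ΔC RC ΔC RC α) (bijα : Function.Bijective α)
    (homβ : IsHom ΔM RM ΔM RM β) (bijβ : Function.Bijective β)
    (β' : M →ₗ[k] M) (hβ'₁ : β ∘ₗ β' = LinearMap.id) (hβ'₂ : β' ∘ₗ β = LinearMap.id) :
    -- `s(g(e)) = t'(e) − t(e)` is well defined:
    (∀ e e' : E, g e = g e' → t' e - t e = t' e' - t e') ∧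
    -- the twisted cocycles are equivalent via `α ∘ s ∘ β⁻¹`:
    (∀ s : M →ₗ[k] C, s ∘ₗ g = t' - t →
      EquivVia ΔC RC ΔM RM (α ∘ₗ s ∘ₗ β')
        (TensorProduct.map α α ∘ₗ h ∘ₗ β') (TensorProduct.map β α ∘ₗ ρ ∘ₗ β')
        (α ∘ₗ φ ∘ₗ β')
        (TensorProduct.map α α ∘ₗ h' ∘ₗ β') (TensorProduct.map β α ∘ₗ ρ' ∘ₗ β')
        (α ∘ₗ φ' ∘ₗ β')) ∧
    -- consequently, the Wells class `[(h_{(α,β)},ρ_{(α,β)},φ_{(α,β)}) − (h,ρ,φ)]`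
    -- does not depend on the choice of retraction:
    Quot.mk (PairRel ΔC RC ΔM RM)
        ((TensorProduct.map α α ∘ₗ h' ∘ₗ β', TensorProduct.map β α ∘ₗ ρ' ∘ₗ β',
            α ∘ₗ φ' ∘ₗ β'), (h', ρ', φ'))
      = Quot.mk (PairRel ΔC RC ΔM RM)
        ((TensorProduct.map α α ∘ₗ h ∘ₗ β', TensorProduct.map β α ∘ₗ ρ ∘ₗ β',
            α ∘ₗ φ ∘ₗ β'), (h, ρ, φ)) := by
  exact stmt15_general ΔC RC ΔM RM ΔE RE hE.1 f g homg surjg (exact_iff.mpr hexact.symm) t t'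
    (ht'.trans ht.symm) h ρ φ ⟨hh, hρ, hφ⟩ h' ρ' φ' ⟨hh', hρ', hφ'⟩ α β homα homβ β' hβ'₁ hβ'₂

end
end

section
/- Let 0 → C →f E →g M → 0 be a non-abelian extension of λ-weighted Rota-Baxter Lie coalgebras with retraction t and induced non-abelian 2-cocycle (h, ρ, φ). Let Aut_C(E) = {γ ∈ Aut(E) : γ(C) = C}, let K : Aut_C(E) → Aut(C)×Aut(M) be given by K(γ) = (α, β) with α(c) = tγf(c) and β(g(e)) = gγ(e), and let Aut_C^M(E) = {γ ∈ Aut_C(E) : K(γ) = (I_C, I_M)}. Then the sequence 1 → Aut_C^M(E) → Aut_C(E) →K Aut(C)×Aut(M) →W H²_nab(M,C) is exact: the inclusion is injective with image equal to Ker K, and a pair (α, β) lies in the image of K if and only if W(α, β) = 0, i.e. if and only if the cocycles (h_{(α,β)}, ρ_{(α,β)}, φ_{(α,β)}) and (h, ρ, φ) are equivalent. -/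
open TensorProduct LinearMap

section

variable {k : Type*} [Field k]
variable {C : Type*} [AddCommGroup C] [Module k C]
variable {M : Type*} [AddCommGroup M] [Module k M]
variable {E : Type*} [AddCommGroup E] [Module k E]

/-!
If `γ` is an automorphism of the extension over `(α, β)`, then the twisted cocycle is the one
induced by the retraction `t' = α t γ⁻¹`. Changing a retraction by `s ∘ g` with `s : M → C`
changes the induced cocycle exactly by the equivalence move of `s`, so twisted and original
cocycle are equivalent.

Conversely, if the twisted cocycle is equivalent to `(h, ρ, φ)` via `s`, then it is induced by
`t' = t - s ∘ g`. The isomorphisms `(t, g)` and `(t', g)` of `E` with `C × M` turn `α × β` into a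
linear bijection `γ` of `E` with `t' γ = α t` and `g γ = β g`. A co-antisymmetric tensor in
`E ⊗ E` is determined by its images under `t' ⊗ t'`, `g ⊗ t'` and `g ⊗ g`, and after these
projections the statement that `γ` is a homomorphism says that the twisted cocycle is the one
induced by `t'`.
-/

section SplitExact

variable {R : Type*} [Ring R]
variable {V₁ V₂ V₃ W₁ W₂ W₃ X : Type*}
variable [AddCommGroup V₁] [Module R V₁] [AddCommGroup V₂] [Module R V₂]
variable [AddCommGroup V₃] [Module R V₃] [AddCommGroup W₁] [Module R W₁]
variable [AddCommGroup W₂] [Module R W₂] [AddCommGroup W₃] [Module R W₃]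
variable [AddCommGroup X] [Module R X]

theorem bijective_prod_of_exact {f : V₁ →ₗ[R] V₂} {g : V₂ →ₗ[R] V₃} {t : V₂ →ₗ[R] V₁}
    (hfg : Function.Exact f g) (hg : Function.Surjective g) (ht : t ∘ₗ f = LinearMap.id) :
    Function.Bijective (t.prod g) :=
  (hfg.splitInjectiveEquiv hg ⟨t, ht⟩).1.bijective

theorem exists_comp_eq_of_exact {f : V₁ →ₗ[R] V₂} {g : V₂ →ₗ[R] V₃}
    (hfg : Function.Exact f g) (hg : Function.Surjective g) {u : V₂ →ₗ[R] X}
    (hu : u ∘ₗ f = 0) : ∃ v : V₃ →ₗ[R] X, v ∘ₗ g = u := by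
  refine ⟨(range f).liftQ u (range_le_ker_iff.2 hu) ∘ₗ
    (hfg.linearEquivOfSurjective hg).symm.toLinearMap, LinearMap.ext fun x => ?_⟩
  simp only [comp_apply, LinearEquiv.coe_coe,
    Function.Exact.linearEquivOfSurjective_symm_apply, Submodule.liftQ_apply]

theorem exists_comp_add_comp_eq_id {p : V₂ →ₗ[R] V₁} {q : V₂ →ₗ[R] V₃}
    (hpq : Function.Bijective (p.prod q)) :
    ∃ (i : V₁ →ₗ[R] V₂) (j : V₃ →ₗ[R] V₂), i ∘ₗ p + j ∘ₗ q = LinearMap.id := by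
  let e := LinearEquiv.ofBijective (p.prod q) hpq
  refine ⟨e.symm.toLinearMap ∘ₗ inl R V₁ V₃, e.symm.toLinearMap ∘ₗ inr R V₁ V₃,
    LinearMap.ext fun x => ?_⟩
  calc e.symm (p x, 0) + e.symm (0, q x) = e.symm (e x) := by
        rw [← map_add, Prod.mk_add_mk, add_zero, zero_add]
        rfl
    _ = x := e.symm_apply_apply x

theorem exists_bijective_lift {p : V₂ →ₗ[R] V₁} {q : V₂ →ₗ[R] V₃}
    (hpq : Function.Bijective (p.prod q)) {p' : W₂ →ₗ[R] W₁} {q' : W₂ →ₗ[R] W₃}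
    (hpq' : Function.Bijective (p'.prod q')) {α : V₁ →ₗ[R] W₁} (hα : Function.Bijective α)
    {β : V₃ →ₗ[R] W₃} (hβ : Function.Bijective β) :
    ∃ γ : V₂ →ₗ[R] W₂, Function.Bijective γ ∧ p' ∘ₗ γ = α ∘ₗ p ∧ q' ∘ₗ γ = β ∘ₗ q := by
  let e := LinearEquiv.ofBijective (p.prod q) hpq
  let e' := LinearEquiv.ofBijective (p'.prod q') hpq'
  let αβ := (LinearEquiv.ofBijective α hα).prodCongr (LinearEquiv.ofBijective β hβ)
  let γ := e ≪≫ₗ αβ ≪≫ₗ e'.symm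
  have hγ (x : V₂) : (p' (γ x), q' (γ x)) = (α (p x), β (q x)) :=
    e'.apply_symm_apply (α (p x), β (q x))
  exact ⟨γ.toLinearMap, γ.bijective, LinearMap.ext fun x => congrArg Prod.fst (hγ x),
    LinearMap.ext fun x => congrArg Prod.snd (hγ x)⟩

theorem comp_eq_iff_sub_eq {g : V₂ →ₗ[R] V₃} (hg : Function.Surjective g) {a b d : V₃ →ₗ[R] X}
    {u : V₂ →ₗ[R] X} (hb : b ∘ₗ g = u + d ∘ₗ g) : a ∘ₗ g = u ↔ b - a = d := by
  rw [← cancel_right hg, sub_comp, hb, sub_eq_iff_eq_add, add_comm, add_right_inj, eq_comm]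

theorem map_ker_eq_ker_of_comp_eq {q : V₂ →ₗ[R] V₃} {q' : W₂ →ₗ[R] W₃} {γ : V₂ →ₗ[R] W₂}
    {β : V₃ →ₗ[R] W₃} (hγ : Function.Surjective γ) (hβ : Function.Injective β)
    (hq : q' ∘ₗ γ = β ∘ₗ q) : (ker q).map γ = ker q' := by
  have hker : ker q = (ker q').comap γ := by
    rw [← ker_comp, hq, ker_comp_of_ker_eq_bot _ (ker_eq_bot.2 hβ)]
  rw [hker, Submodule.map_comap_eq_of_surjective hγ]

end SplitExact

section AntisymmetricTensor

variable {R U V P Q : Type*} [CommRing R] [AddCommGroup U] [Module R U]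
variable [AddCommGroup V] [Module R V] [AddCommGroup P] [Module R P] [AddCommGroup Q] [Module R Q]

theorem map_comp_eq_neg_comm_comp {F : U →ₗ[R] V ⊗[R] V}
    (hF : F = -((TensorProduct.comm R V V).toLinearMap ∘ₗ F)) (p : V →ₗ[R] P) (q : V →ₗ[R] Q) :
    TensorProduct.map p q ∘ₗ F =
      -((TensorProduct.comm R Q P).toLinearMap ∘ₗ TensorProduct.map q p ∘ₗ F) := by
  conv_lhs => rw [hF]
  rw [comp_neg, ← comp_assoc, TensorProduct.map_comp_comm_eq, comp_assoc]

theorem eq_of_map_eq_of_eq_neg_comm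
    {p : V →ₗ[R] P} {q : V →ₗ[R] Q} (hpq : Function.Bijective (p.prod q))
    {F G : U →ₗ[R] V ⊗[R] V}
    (hF : F = -((TensorProduct.comm R V V).toLinearMap ∘ₗ F))
    (hG : G = -((TensorProduct.comm R V V).toLinearMap ∘ₗ G))
    (hpp : TensorProduct.map p p ∘ₗ F = TensorProduct.map p p ∘ₗ G)
    (hqp : TensorProduct.map q p ∘ₗ F = TensorProduct.map q p ∘ₗ G)
    (hqq : TensorProduct.map q q ∘ₗ F = TensorProduct.map q q ∘ₗ G) : F = G := by
  obtain ⟨i, j, hij⟩ := exists_comp_add_comp_eq_id hpq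
  have hpq_comp : TensorProduct.map p q ∘ₗ F = TensorProduct.map p q ∘ₗ G := by
    rw [map_comp_eq_neg_comm_comp hF, map_comp_eq_neg_comm_comp hG, hqp]
  have hdecomp (H : U →ₗ[R] V ⊗[R] V) : H =
      TensorProduct.map i i ∘ₗ TensorProduct.map p p ∘ₗ H
        + TensorProduct.map j i ∘ₗ TensorProduct.map q p ∘ₗ H
        + (TensorProduct.map i j ∘ₗ TensorProduct.map p q ∘ₗ H
        + TensorProduct.map j j ∘ₗ TensorProduct.map q q ∘ₗ H) := by
    conv_lhs => rw [← id_comp H, ← TensorProduct.map_id, ← hij, TensorProduct.map_add_right,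
      TensorProduct.map_add_left, TensorProduct.map_add_left]
    simp only [TensorProduct.map_comp, add_comp, comp_assoc]
  rw [hdecomp F, hdecomp G, hpp, hqp, hpq_comp, hqq]

end AntisymmetricTensor

section Extension

variable {ΔC : C →ₗ[k] C ⊗[k] C} {RC : C →ₗ[k] C}
variable {ΔM : M →ₗ[k] M ⊗[k] M} {RM : M →ₗ[k] M}
variable {ΔE : E →ₗ[k] E ⊗[k] E} {RE : E →ₗ[k] E}

theorem map_add_comp_comp_eq (hE : CoAnti ΔE) {g : E →ₗ[k] M}
    (hg : TensorProduct.map g g ∘ₗ ΔE = ΔM ∘ₗ g) (t : E →ₗ[k] C) (s : M →ₗ[k] C) :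
    TensorProduct.map (t + s ∘ₗ g) (t + s ∘ₗ g) ∘ₗ ΔE =
      TensorProduct.map t t ∘ₗ ΔE
        + TensorProduct.map s LinearMap.id ∘ₗ TensorProduct.map g t ∘ₗ ΔE
        - (TensorProduct.comm k C C).toLinearMap ∘ₗ
            TensorProduct.map s LinearMap.id ∘ₗ TensorProduct.map g t ∘ₗ ΔE
        + TensorProduct.map s s ∘ₗ ΔM ∘ₗ g := by
  have hst : TensorProduct.map s LinearMap.id ∘ₗ TensorProduct.map g t ∘ₗ ΔE =
      TensorProduct.map (s ∘ₗ g) t ∘ₗ ΔE := by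
    rw [← comp_assoc, ← TensorProduct.map_comp, id_comp]
  have hss : TensorProduct.map s s ∘ₗ ΔM ∘ₗ g =
      TensorProduct.map (s ∘ₗ g) (s ∘ₗ g) ∘ₗ ΔE := by
    rw [← hg, ← comp_assoc, ← TensorProduct.map_comp]
  rw [hst, hss, sub_eq_add_neg, ← map_comp_eq_neg_comm_comp hE t (s ∘ₗ g),
    TensorProduct.map_add_right, TensorProduct.map_add_left, TensorProduct.map_add_left]
  simp only [add_comp]
  abel

/-- `(h, ρ, φ)` is the triple of maps which the map `t : E → C` (a retraction in the applications)
induces on the quotient `g : E → M`, each map being specified by its composite with `g`. -/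
structure InducesCocycle (ΔC : C →ₗ[k] C ⊗[k] C) (RC : C →ₗ[k] C)
    (ΔE : E →ₗ[k] E ⊗[k] E) (RE : E →ₗ[k] E) (g : E →ₗ[k] M) (t : E →ₗ[k] C)
    (h : M →ₗ[k] C ⊗[k] C) (ρ : M →ₗ[k] M ⊗[k] C) (φ : M →ₗ[k] C) : Prop where
  cobracket_comp : h ∘ₗ g = TensorProduct.map t t ∘ₗ ΔE - ΔC ∘ₗ t
  coaction_comp : ρ ∘ₗ g = TensorProduct.map g t ∘ₗ ΔE
  operator_comp : φ ∘ₗ g = t ∘ₗ RE - RC ∘ₗ t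

theorem inducesCocycle_iff_equivVia (hE : CoAnti ΔE) {g : E →ₗ[k] M}
    (hg : IsHom ΔE RE ΔM RM g) (surjg : Function.Surjective g) {t : E →ₗ[k] C} {s : M →ₗ[k] C}
    {h h' : M →ₗ[k] C ⊗[k] C} {ρ ρ' : M →ₗ[k] M ⊗[k] C} {φ φ' : M →ₗ[k] C}
    (ind : InducesCocycle ΔC RC ΔE RE g (t + s ∘ₗ g) h' ρ' φ') :
    InducesCocycle ΔC RC ΔE RE g t h ρ φ ↔ EquivVia ΔC RC ΔM RM s h ρ φ h' ρ' φ' := by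
  have hρ : ρ ∘ₗ g = TensorProduct.map g t ∘ₗ ΔE ↔ ρ' - ρ = lTensor M s ∘ₗ ΔM := by
    refine comp_eq_iff_sub_eq surjg ?_
    rw [ind.coaction_comp, TensorProduct.map_add_right, add_comp, comp_assoc, ← hg.1, ← comp_assoc,
      lTensor, ← TensorProduct.map_comp, id_comp]
  have hh (hρg : ρ ∘ₗ g = TensorProduct.map g t ∘ₗ ΔE) :
      h ∘ₗ g = TensorProduct.map t t ∘ₗ ΔE - ΔC ∘ₗ t ↔
        h' - h = TensorProduct.map s LinearMap.id ∘ₗ ρ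
          - (TensorProduct.comm k C C).toLinearMap ∘ₗ TensorProduct.map s LinearMap.id ∘ₗ ρ
          + TensorProduct.map s s ∘ₗ ΔM - ΔC ∘ₗ s := by
    refine comp_eq_iff_sub_eq surjg ?_
    rw [ind.cobracket_comp, map_add_comp_comp_eq hE hg.1, ← hρg]
    simp only [sub_comp, add_comp, comp_add, comp_assoc]
    abel
  have hφ : φ ∘ₗ g = t ∘ₗ RE - RC ∘ₗ t ↔ φ' - φ = s ∘ₗ RM - RC ∘ₗ s := by
    refine comp_eq_iff_sub_eq surjg ?_
    rw [ind.operator_comp]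
    simp only [sub_comp, add_comp, comp_add, comp_assoc, hg.2]
    abel
  exact ⟨fun H => ⟨(hh H.coaction_comp).1 H.cobracket_comp, hρ.1 H.coaction_comp,
      hφ.1 H.operator_comp⟩,
    fun H => ⟨(hh (hρ.2 H.2.1)).2 H.1, hρ.2 H.2.1, hφ.2 H.2.2⟩⟩

variable {C' M' E' : Type*} [AddCommGroup C'] [Module k C'] [AddCommGroup M'] [Module k M']
variable [AddCommGroup E'] [Module k E']
variable {ΔC' : C' →ₗ[k] C' ⊗[k] C'} {RC' : C' →ₗ[k] C'}
variable {ΔM' : M' →ₗ[k] M' ⊗[k] M'} {RM' : M' →ₗ[k] M'}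
variable {ΔE' : E' →ₗ[k] E' ⊗[k] E'} {RE' : E' →ₗ[k] E'}

theorem isHom_iff_map_comp_eq (hE : CoAnti ΔE) (hE' : CoAnti ΔE') {g : E →ₗ[k] M}
    (hg : IsHom ΔE RE ΔM RM g) {g' : E' →ₗ[k] M'} (hg' : IsHom ΔE' RE' ΔM' RM' g')
    {t' : E' →ₗ[k] C'} (bij : Function.Bijective (t'.prod g')) {β : M →ₗ[k] M'}
    (hβ : IsHom ΔM RM ΔM' RM' β) {γ : E →ₗ[k] E'} (hgγ : g' ∘ₗ γ = β ∘ₗ g) :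
    IsHom ΔE RE ΔE' RE' γ ↔
      TensorProduct.map t' t' ∘ₗ TensorProduct.map γ γ ∘ₗ ΔE =
          TensorProduct.map t' t' ∘ₗ ΔE' ∘ₗ γ ∧
        TensorProduct.map g' t' ∘ₗ TensorProduct.map γ γ ∘ₗ ΔE =
          TensorProduct.map g' t' ∘ₗ ΔE' ∘ₗ γ ∧
        t' ∘ₗ RE' ∘ₗ γ = t' ∘ₗ γ ∘ₗ RE := by
  refine ⟨fun H => by rw [H.1, H.2]; exact ⟨rfl, rfl, rfl⟩, fun ⟨htt, hgt, htR⟩ => ⟨?_, ?_⟩⟩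
  · have hγγ_anti := map_comp_eq_neg_comm_comp hE γ γ
    have hΔγ_anti : ΔE' ∘ₗ γ = -((TensorProduct.comm k E' E').toLinearMap ∘ₗ ΔE' ∘ₗ γ) := by
      conv_lhs => rw [hE', neg_comp, comp_assoc]
    have hgg : TensorProduct.map g' g' ∘ₗ TensorProduct.map γ γ ∘ₗ ΔE =
        TensorProduct.map g' g' ∘ₗ ΔE' ∘ₗ γ :=
      calc TensorProduct.map g' g' ∘ₗ TensorProduct.map γ γ ∘ₗ ΔE
          = TensorProduct.map β β ∘ₗ TensorProduct.map g g ∘ₗ ΔE := by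
            simp only [← comp_assoc, ← TensorProduct.map_comp, hgγ]
        _ = ΔM' ∘ₗ β ∘ₗ g := by rw [hg.1, ← comp_assoc, hβ.1, comp_assoc]
        _ = TensorProduct.map g' g' ∘ₗ ΔE' ∘ₗ γ := by
            rw [← hgγ, ← comp_assoc, ← hg'.1, comp_assoc]
    exact eq_of_map_eq_of_eq_neg_comm bij hγγ_anti hΔγ_anti htt hgt hgg
  · have hgR : g' ∘ₗ RE' ∘ₗ γ = g' ∘ₗ γ ∘ₗ RE :=
      calc g' ∘ₗ RE' ∘ₗ γ = RM' ∘ₗ β ∘ₗ g := by rw [← comp_assoc, ← hg'.2, comp_assoc, hgγ]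
        _ = β ∘ₗ g ∘ₗ RE := by rw [← comp_assoc, hβ.2, comp_assoc, hg.2]
        _ = g' ∘ₗ γ ∘ₗ RE := by rw [← comp_assoc, ← hgγ, comp_assoc]
    rw [← cancel_left bij.1, prod_comp, prod_comp, htR, hgR]

theorem inducesCocycle_twist_iff {g : E →ₗ[k] M} {t : E →ₗ[k] C}
    {h : M →ₗ[k] C ⊗[k] C} {ρ : M →ₗ[k] M ⊗[k] C} {φ : M →ₗ[k] C}
    (ind : InducesCocycle ΔC RC ΔE RE g t h ρ φ) {g' : E' →ₗ[k] M'} {t' : E' →ₗ[k] C'}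
    {α : C →ₗ[k] C'} (hα : IsHom ΔC RC ΔC' RC' α) {β : M →ₗ[k] M'} {β' : M' →ₗ[k] M}
    (hβ' : β' ∘ₗ β = LinearMap.id) {γ : E →ₗ[k] E'} (hγ : Function.Surjective γ)
    (htγ : t' ∘ₗ γ = α ∘ₗ t) (hgγ : g' ∘ₗ γ = β ∘ₗ g) :
    InducesCocycle ΔC' RC' ΔE' RE' g' t' (TensorProduct.map α α ∘ₗ h ∘ₗ β')
        (TensorProduct.map β α ∘ₗ ρ ∘ₗ β') (α ∘ₗ φ ∘ₗ β') ↔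
      TensorProduct.map t' t' ∘ₗ TensorProduct.map γ γ ∘ₗ ΔE =
          TensorProduct.map t' t' ∘ₗ ΔE' ∘ₗ γ ∧
        TensorProduct.map g' t' ∘ₗ TensorProduct.map γ γ ∘ₗ ΔE =
          TensorProduct.map g' t' ∘ₗ ΔE' ∘ₗ γ ∧
        t' ∘ₗ RE' ∘ₗ γ = t' ∘ₗ γ ∘ₗ RE := by
  have hβ'g : β' ∘ₗ g' ∘ₗ γ = g := by rw [hgγ, ← comp_assoc, hβ', id_comp]
  have htt : TensorProduct.map t' t' ∘ₗ TensorProduct.map γ γ ∘ₗ ΔE =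
      TensorProduct.map α α ∘ₗ h ∘ₗ g + ΔC' ∘ₗ t' ∘ₗ γ := by
    rw [ind.cobracket_comp, htγ, ← comp_assoc t α ΔC', ← hα.1, comp_assoc, ← comp_add,
      sub_add_cancel]
    simp only [← comp_assoc, ← TensorProduct.map_comp, htγ]
  have hgt : TensorProduct.map g' t' ∘ₗ TensorProduct.map γ γ ∘ₗ ΔE =
      TensorProduct.map β α ∘ₗ ρ ∘ₗ g := by
    rw [ind.coaction_comp]
    simp only [← comp_assoc, ← TensorProduct.map_comp, htγ, hgγ]
  have htR : t' ∘ₗ γ ∘ₗ RE = α ∘ₗ φ ∘ₗ g + RC' ∘ₗ t' ∘ₗ γ := by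
    rw [ind.operator_comp, htγ, ← comp_assoc t α RC', hα.2, comp_assoc, ← comp_add,
      sub_add_cancel, ← comp_assoc, htγ, comp_assoc]
  have hcobracket : (TensorProduct.map α α ∘ₗ h ∘ₗ β') ∘ₗ g' =
        TensorProduct.map t' t' ∘ₗ ΔE' - ΔC' ∘ₗ t' ↔
      TensorProduct.map t' t' ∘ₗ TensorProduct.map γ γ ∘ₗ ΔE =
        TensorProduct.map t' t' ∘ₗ ΔE' ∘ₗ γ := by
    rw [← cancel_right hγ, sub_comp, eq_sub_iff_add_eq, htt]
    simp only [comp_assoc, hβ'g]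
  have hcoaction : (TensorProduct.map β α ∘ₗ ρ ∘ₗ β') ∘ₗ g' = TensorProduct.map g' t' ∘ₗ ΔE' ↔
      TensorProduct.map g' t' ∘ₗ TensorProduct.map γ γ ∘ₗ ΔE =
        TensorProduct.map g' t' ∘ₗ ΔE' ∘ₗ γ := by
    rw [← cancel_right hγ, hgt]
    simp only [comp_assoc, hβ'g]
  have hoperator : (α ∘ₗ φ ∘ₗ β') ∘ₗ g' = t' ∘ₗ RE' - RC' ∘ₗ t' ↔
      t' ∘ₗ RE' ∘ₗ γ = t' ∘ₗ γ ∘ₗ RE := by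
    rw [← cancel_right hγ, sub_comp, eq_sub_iff_add_eq, htR, eq_comm]
    simp only [comp_assoc, hβ'g]
  rw [← hcobracket, ← hcoaction, ← hoperator]
  exact ⟨fun H => ⟨H.1, H.2, H.3⟩, fun H => ⟨H.1, H.2.1, H.2.2⟩⟩

theorem isHom_iff_equivVia_twist (hE : CoAnti ΔE) (hE' : CoAnti ΔE') {g : E →ₗ[k] M}
    (hg : IsHom ΔE RE ΔM RM g) {g' : E' →ₗ[k] M'} (hg' : IsHom ΔE' RE' ΔM' RM' g')
    {t : E →ₗ[k] C} {h : M →ₗ[k] C ⊗[k] C} {ρ : M →ₗ[k] M ⊗[k] C} {φ : M →ₗ[k] C}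
    (ind : InducesCocycle ΔC RC ΔE RE g t h ρ φ)
    {t' : E' →ₗ[k] C'} {s : M' →ₗ[k] C'} (bij : Function.Bijective (t'.prod g'))
    {h' : M' →ₗ[k] C' ⊗[k] C'} {ρ' : M' →ₗ[k] M' ⊗[k] C'} {φ' : M' →ₗ[k] C'}
    (ind' : InducesCocycle ΔC' RC' ΔE' RE' g' (t' + s ∘ₗ g') h' ρ' φ')
    {α : C →ₗ[k] C'} (hα : IsHom ΔC RC ΔC' RC' α) {β : M →ₗ[k] M'}
    (hβ : IsHom ΔM RM ΔM' RM' β) {β' : M' →ₗ[k] M} (hβ' : β' ∘ₗ β = LinearMap.id)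
    {γ : E →ₗ[k] E'} (hγ : Function.Surjective γ)
    (htγ : t' ∘ₗ γ = α ∘ₗ t) (hgγ : g' ∘ₗ γ = β ∘ₗ g) :
    IsHom ΔE RE ΔE' RE' γ ↔ EquivVia ΔC' RC' ΔM' RM' s (TensorProduct.map α α ∘ₗ h ∘ₗ β')
      (TensorProduct.map β α ∘ₗ ρ ∘ₗ β') (α ∘ₗ φ ∘ₗ β') h' ρ' φ' := by
  have surjg' : Function.Surjective g' := Prod.snd_surjective.comp bij.2
  rw [isHom_iff_map_comp_eq hE hE' hg hg' bij hβ hgγ,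
    ← inducesCocycle_twist_iff ind hα hβ' hγ htγ hgγ,
    inducesCocycle_iff_equivVia hE' hg' surjg' ind']

end Extension

theorem stmt16_general (ΔC : C →ₗ[k] C ⊗[k] C) (RC : C →ₗ[k] C)
    (ΔM : M →ₗ[k] M ⊗[k] M) (RM : M →ₗ[k] M)
    (ΔE : E →ₗ[k] E ⊗[k] E) (RE : E →ₗ[k] E) (hE : CoAnti ΔE)
    (f : C →ₗ[k] E) (g : E →ₗ[k] M) (homg : IsHom ΔE RE ΔM RM g)
    (surjg : Function.Surjective g) (hexact : LinearMap.range f = LinearMap.ker g)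
    (t : E →ₗ[k] C) (ht : t ∘ₗ f = LinearMap.id)
    (h : M →ₗ[k] C ⊗[k] C) (ρ : M →ₗ[k] M ⊗[k] C) (φ : M →ₗ[k] C)
    (ind : InducesCocycle ΔC RC ΔE RE g t h ρ φ) :
    (∀ γ : E →ₗ[k] E,
        (IsHom ΔE RE ΔE RE γ ∧ Function.Bijective γ ∧
          Submodule.map γ (LinearMap.range f) = LinearMap.range f) →
        ((t ∘ₗ γ ∘ₗ f = LinearMap.id ∧ g ∘ₗ γ = g) ↔
          (IsHom ΔE RE ΔE RE γ ∧ Function.Bijective γ ∧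
            Submodule.map γ (LinearMap.range f) = LinearMap.range f ∧
            t ∘ₗ γ ∘ₗ f = LinearMap.id ∧ g ∘ₗ γ = g))) ∧
    (∀ (α : C →ₗ[k] C) (β : M →ₗ[k] M),
      IsHom ΔC RC ΔC RC α → Function.Bijective α →
      IsHom ΔM RM ΔM RM β → Function.Bijective β →
      ∀ β' : M →ₗ[k] M, β' ∘ₗ β = LinearMap.id →
      ((∃ γ : E →ₗ[k] E,
          IsHom ΔE RE ΔE RE γ ∧ Function.Bijective γ ∧
          Submodule.map γ (LinearMap.range f) = LinearMap.range f ∧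
          t ∘ₗ γ ∘ₗ f = α ∧ g ∘ₗ γ = β ∘ₗ g) ↔
        CocEquiv ΔC RC ΔM RM
          (TensorProduct.map α α ∘ₗ h ∘ₗ β')
          (TensorProduct.map β α ∘ₗ ρ ∘ₗ β')
          (α ∘ₗ φ ∘ₗ β')
          h ρ φ)) := by
  have hfg : Function.Exact f g := exact_iff.2 hexact.symm
  have hgf : g ∘ₗ f = 0 := hfg.linearMap_comp_eq_zero
  have bij (s : M →ₗ[k] C) : Function.Bijective ((t - s ∘ₗ g).prod g) :=
    bijective_prod_of_exact hfg surjg (by rw [sub_comp, comp_assoc, hgf, comp_zero, sub_zero, ht])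
  have ind' (s : M →ₗ[k] C) : InducesCocycle ΔC RC ΔE RE g (t - s ∘ₗ g + s ∘ₗ g) h ρ φ := by
    rwa [sub_add_cancel]
  refine ⟨fun γ hγ => ⟨fun hK => ⟨hγ.1, hγ.2.1, hγ.2.2, hK⟩, fun hK => hK.2.2.2⟩,
    fun α β hα bijα hβ bijβ β' hβ' => ⟨?_, ?_⟩⟩
  · rintro ⟨γ, hγ, bijγ, -, hγα, hgγ⟩
    obtain ⟨v, hv⟩ := exists_comp_eq_of_exact hfg surjg (u := t ∘ₗ γ - α ∘ₗ t)
      (by rw [sub_comp, comp_assoc, hγα, comp_assoc, ht, comp_id, sub_self])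
    have htγ : (t - (v ∘ₗ β') ∘ₗ g) ∘ₗ γ = α ∘ₗ t := by
      rw [sub_comp, comp_assoc, comp_assoc, hgγ, ← comp_assoc g, hβ', id_comp, hv, sub_sub_cancel]
    exact ⟨v ∘ₗ β', (isHom_iff_equivVia_twist hE hE homg homg ind (bij _) (ind' _) hα hβ hβ'
      bijγ.2 htγ hgγ).1 hγ⟩
  · rintro ⟨s, hs⟩
    obtain ⟨γ, bijγ, htγ, hgγ⟩ :=
      exists_bijective_lift (bijective_prod_of_exact hfg surjg ht) (bij s) bijα bijβ
    have hγ : IsHom ΔE RE ΔE RE γ := (isHom_iff_equivVia_twist hE hE homg homg ind (bij s) (ind' s)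
      hα hβ hβ' bijγ.2 htγ hgγ).2 hs
    have hmap : (range f).map γ = range f := by
      rw [hexact, map_ker_eq_ker_of_comp_eq bijγ.2 bijβ.1 hgγ]
    have htγ' : t ∘ₗ γ = α ∘ₗ t + s ∘ₗ β ∘ₗ g := by
      rw [← htγ, ← hgγ, sub_comp, comp_assoc, sub_add_cancel]
    have hγα : t ∘ₗ γ ∘ₗ f = α := by
      rw [← comp_assoc, htγ', add_comp, comp_assoc, ht, comp_assoc, comp_assoc, hgf, comp_zero,
        comp_zero, add_zero, comp_id]
    exact ⟨γ, hγ, bijγ, hmap, hγα, hgγ⟩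

theorem stmt16 (lam : k) (ΔC : C →ₗ[k] C ⊗[k] C) (RC : C →ₗ[k] C)
    (ΔM : M →ₗ[k] M ⊗[k] M) (RM : M →ₗ[k] M)
    (ΔE : E →ₗ[k] E ⊗[k] E) (RE : E →ₗ[k] E)
    (hC : IsRBLC lam ΔC RC) (hM : IsRBLC lam ΔM RM) (hE : IsRBLC lam ΔE RE)
    (f : C →ₗ[k] E) (g : E →ₗ[k] M)
    (homf : IsHom ΔC RC ΔE RE f) (homg : IsHom ΔE RE ΔM RM g)
    (injf : Function.Injective f) (surjg : Function.Surjective g)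
    (hexact : LinearMap.range f = LinearMap.ker g)
    (t : E →ₗ[k] C) (ht : t ∘ₗ f = LinearMap.id)
    (h : M →ₗ[k] C ⊗[k] C) (ρ : M →ₗ[k] M ⊗[k] C) (φ : M →ₗ[k] C)
    (hh : h ∘ₗ g = TensorProduct.map t t ∘ₗ ΔE - ΔC ∘ₗ t)
    (hρ : ρ ∘ₗ g = TensorProduct.map g t ∘ₗ ΔE)
    (hφ : φ ∘ₗ g = t ∘ₗ RE - RC ∘ₗ t) :
    -- Exactness at `Aut_C(E)`: the image of the inclusion
    -- `Aut_C^M(E) → Aut_C(E)` consists exactly of those `γ ∈ Aut_C(E)` with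
    -- `K(γ) = (I_C, I_M)`, and the inclusion is injective:
    (∀ γ : E →ₗ[k] E,
        (IsHom ΔE RE ΔE RE γ ∧ Function.Bijective γ ∧
          Submodule.map γ (LinearMap.range f) = LinearMap.range f) →
        ((t ∘ₗ γ ∘ₗ f = LinearMap.id ∧ g ∘ₗ γ = g) ↔
          (IsHom ΔE RE ΔE RE γ ∧ Function.Bijective γ ∧
            Submodule.map γ (LinearMap.range f) = LinearMap.range f ∧
            t ∘ₗ γ ∘ₗ f = LinearMap.id ∧ g ∘ₗ γ = g))) ∧
    -- Exactness at `Aut(C) × Aut(M)`: a pair `(α, β)` of automorphisms lies in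
    -- the image of `K` iff its Wells class vanishes, i.e. iff the twisted
    -- cocycle is equivalent to `(h, ρ, φ)`:
    (∀ (α : C →ₗ[k] C) (β : M →ₗ[k] M),
      IsHom ΔC RC ΔC RC α → Function.Bijective α →
      IsHom ΔM RM ΔM RM β → Function.Bijective β →
      ∀ β' : M →ₗ[k] M, β ∘ₗ β' = LinearMap.id → β' ∘ₗ β = LinearMap.id →
      ((∃ γ : E →ₗ[k] E,
          IsHom ΔE RE ΔE RE γ ∧ Function.Bijective γ ∧
          Submodule.map γ (LinearMap.range f) = LinearMap.range f ∧
          t ∘ₗ γ ∘ₗ f = α ∧ g ∘ₗ γ = β ∘ₗ g) ↔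
        CocEquiv ΔC RC ΔM RM
          (TensorProduct.map α α ∘ₗ h ∘ₗ β')
          (TensorProduct.map β α ∘ₗ ρ ∘ₗ β')
          (α ∘ₗ φ ∘ₗ β')
          h ρ φ)) := by
  have wells := stmt16_general ΔC RC ΔM RM ΔE RE hE.1 f g homg surjg hexact t ht h ρ φ ⟨hh, hρ, hφ⟩
  exact ⟨wells.1, fun α β hα bijα hβ bijβ β' _ hβ' => wells.2 α β hα bijα hβ bijβ β' hβ'⟩

end
end

section
/- Let 0 → C →f E →g M → 0 be a non-abelian extension of λ-weighted Rota-Baxter Lie coalgebras with retraction t and induced non-abelian 2-cocycle (h, ρ, φ). Let Ker K = {γ ∈ Aut(E) : tγf = I_C and gγ = g}. Then the map χ : Ker K → Z¹_nab(M,C) given by χ(γ) = s_γ, where s_γ(g(e)) = tγ(e) − t(e), is a well-defined bijective group homomorphism (χ(γ₁γ₂) = χ(γ₁) + χ(γ₂)); hence Ker K ≅ Z¹_nab(M,C), where Z¹_nab(M,C) = {s : M → C linear : (s⊗I)ρ − τ(s⊗I)ρ = Δ_C s − (s⊗s)Δ_M, (I⊗s)Δ_M = 0, and sR_M = R_C s}.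 -/
/-!
Since `g ∘ f = 0`, the maps `γ_s = id + f ∘ s ∘ g` with `s : M → C` linear satisfy
`γ_r ∘ γ_s = γ_(r + s)`, `g ∘ γ_s = g` and `t ∘ γ_s = t + s ∘ g`. By exactness they are all the
linear endomorphisms of `E` inducing the identity on `C` and on `M`, and `χ(γ_s) = s`. What remains
is to see when `γ_s` is a homomorphism. It commutes with `R_E` iff `s R_M = R_C s`. For the
cobrackets, applying `g ⊗ t` to `D = (γ_s ⊗ γ_s)Δ_E - Δ_E γ_s` gives `(I ⊗ s)Δ_M g`. Once this
vanishes, `(I ⊗ f s g)Δ_E = (f t ⊗ f s g)Δ_E`, and likewise with the factors exchanged because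
`Δ_E` is antisymmetric; hence `D = (f ⊗ f) ∘ d ∘ g`, where `d = 0` is the first cocycle equation.
-/

open TensorProduct LinearMap

section

variable {k : Type*} [Field k]
variable {C : Type*} [AddCommGroup C] [Module k C]
variable {M : Type*} [AddCommGroup M] [Module k M]
variable {E : Type*} [AddCommGroup E] [Module k E]

/-- Membership in the group `Z¹_nab(M,C)` of non-abelian 1-cocycles. -/
def IsNA1Cocycle (ΔC : C →ₗ[k] C ⊗[k] C) (RC : C →ₗ[k] C)
    (ΔM : M →ₗ[k] M ⊗[k] M) (RM : M →ₗ[k] M)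
    (ρ : M →ₗ[k] M ⊗[k] C) (s : M →ₗ[k] C) : Prop :=
  (TensorProduct.map s (LinearMap.id : C →ₗ[k] C) ∘ₗ ρ
      - (TensorProduct.comm k C C).toLinearMap ∘ₗ
          TensorProduct.map s (LinearMap.id : C →ₗ[k] C) ∘ₗ ρ
    = ΔC ∘ₗ s - TensorProduct.map s s ∘ₗ ΔM) ∧
  lTensor M s ∘ₗ ΔM = 0 ∧
  s ∘ₗ RM = RC ∘ₗ s

/-- Membership in `Ker K ⊆ Aut(E)`. -/
def InKerK (ΔE : E →ₗ[k] E ⊗[k] E) (RE : E →ₗ[k] E)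
    (f : C →ₗ[k] E) (g : E →ₗ[k] M) (t : E →ₗ[k] C) (γ : E →ₗ[k] E) : Prop :=
  IsHom ΔE RE ΔE RE γ ∧ Function.Bijective γ ∧
    t ∘ₗ γ ∘ₗ f = LinearMap.id ∧ g ∘ₗ γ = g

section Shear

variable {R : Type*} [Ring R]
variable {A : Type*} [AddCommGroup A] [Module R A]
variable {B : Type*} [AddCommGroup B] [Module R B]
variable {X : Type*} [AddCommGroup X] [Module R X]
variable {f : A →ₗ[R] X} {g : X →ₗ[R] B} {t : X →ₗ[R] A}

/-- The shear `γ_s = id + f ∘ s ∘ g` of the middle term of a sequence `A → X → B` along a linear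
map `s : B → A`; in a split exact sequence these are the endomorphisms of `X` that induce the
identity on `A` and on `B`. -/
def shear (f : A →ₗ[R] X) (g : X →ₗ[R] B) (s : B →ₗ[R] A) : X →ₗ[R] X :=
  LinearMap.id + f ∘ₗ s ∘ₗ g

theorem comp_shear (hgf : g ∘ₗ f = 0) (s : B →ₗ[R] A) : g ∘ₗ shear f g s = g := by
  rw [shear, comp_add, ← comp_assoc, hgf, zero_comp, comp_id, add_zero]

theorem shear_comp (hgf : g ∘ₗ f = 0) (s : B →ₗ[R] A) : shear f g s ∘ₗ f = f := by
  rw [shear, add_comp, comp_assoc, comp_assoc, hgf, comp_zero, comp_zero, id_comp, add_zero]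

theorem retraction_comp_shear (ht : t ∘ₗ f = LinearMap.id) (s : B →ₗ[R] A) :
    t ∘ₗ shear f g s = t + s ∘ₗ g := by
  rw [shear, comp_add, ← comp_assoc, ht, comp_id, id_comp]

theorem shear_comp_shear (hgf : g ∘ₗ f = 0) (s s' : B →ₗ[R] A) :
    shear f g s ∘ₗ shear f g s' = shear f g (s + s') := by
  conv_lhs => rw [shear, add_comp, id_comp, comp_assoc, comp_assoc, comp_shear hgf]
  rw [shear, shear, add_comp, comp_add, add_assoc, add_comm (f ∘ₗ s' ∘ₗ g)]

theorem shear_zero : shear f g 0 = LinearMap.id := by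
  rw [shear, zero_comp, comp_zero, add_zero]

theorem shear_bijective (hgf : g ∘ₗ f = 0) (s : B →ₗ[R] A) :
    Function.Bijective (shear f g s) := by
  refine Function.bijective_iff_has_inverse.2 ⟨shear f g (-s), fun x => ?_, fun x => ?_⟩
  · rw [← comp_apply, shear_comp_shear hgf, neg_add_cancel, shear_zero, id_apply]
  · rw [← comp_apply, shear_comp_shear hgf, add_neg_cancel, shear_zero, id_apply]

theorem exists_comp_eq_of_exact_s17 {Y : Type*} [AddCommGroup Y] [Module R Y]
    (hfg : Function.Exact f g) (hg : Function.Surjective g) {ψ : X →ₗ[R] Y} (hψ : ψ ∘ₗ f = 0) :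
    ∃ s : B →ₗ[R] Y, s ∘ₗ g = ψ := by
  have ker_le : ker g ≤ ker ψ := by
    rw [exact_iff.1 hfg]
    exact range_le_ker_iff.2 hψ
  refine ⟨(ker g).liftQ ψ ker_le ∘ₗ (g.quotKerEquivOfSurjective hg).symm, LinearMap.ext fun x => ?_⟩
  have symm_apply : (g.quotKerEquivOfSurjective hg).symm (g x) = (ker g).mkQ x :=
    (LinearEquiv.symm_apply_eq _).2 rfl
  simp only [comp_apply, LinearEquiv.coe_coe, symm_apply, Submodule.mkQ_apply,
    Submodule.liftQ_apply]

theorem comp_eq_sub_iff_eq_shear (hfg : Function.Exact f g) (ht : t ∘ₗ f = LinearMap.id)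
    {γ : X →ₗ[R] X} (hγ : g ∘ₗ γ = g) {s : B →ₗ[R] A} :
    s ∘ₗ g = t ∘ₗ γ - t ↔ γ = shear f g s := by
  refine ⟨fun hs => LinearMap.ext fun x => ?_, ?_⟩
  · obtain ⟨a, ha⟩ : γ x - x ∈ Set.range f :=
      (hfg _).1 (by rw [map_sub, ← comp_apply, hγ, sub_self])
    have s_eq : s (g x) = a := calc
      s (g x) = t (γ x - x) := (LinearMap.congr_fun hs x).trans (map_sub t _ _).symm
      _ = a := by rw [← ha, ← comp_apply, ht, id_apply]
    rw [shear, LinearMap.add_apply, id_apply, comp_apply, comp_apply, s_eq, ha, add_sub_cancel]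
  · rintro rfl
    rw [retraction_comp_shear ht, add_sub_cancel_left]

theorem exists_eq_shear (hfg : Function.Exact f g) (hg : Function.Surjective g)
    (ht : t ∘ₗ f = LinearMap.id) {γ : X →ₗ[R] X} (htγ : t ∘ₗ γ ∘ₗ f = LinearMap.id)
    (hγ : g ∘ₗ γ = g) : ∃ s : B →ₗ[R] A, γ = shear f g s := by
  have vanish : (t ∘ₗ γ - t) ∘ₗ f = 0 := by rw [sub_comp, comp_assoc, htγ, ht, sub_self]
  obtain ⟨s, hs⟩ := exists_comp_eq_of_exact_s17 hfg hg vanish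
  exact ⟨s, (comp_eq_sub_iff_eq_shear hfg ht hγ).1 hs⟩

theorem comp_shear_eq_shear_comp_iff {PA : A →ₗ[R] A} {PB : B →ₗ[R] B} {PX : X →ₗ[R] X}
    (hf : Function.Injective f) (hg : Function.Surjective g)
    (hfP : PX ∘ₗ f = f ∘ₗ PA) (hgP : PB ∘ₗ g = g ∘ₗ PX) (s : B →ₗ[R] A) :
    PX ∘ₗ shear f g s = shear f g s ∘ₗ PX ↔ s ∘ₗ PB = PA ∘ₗ s := by
  have left : PX ∘ₗ f ∘ₗ s ∘ₗ g = f ∘ₗ (PA ∘ₗ s) ∘ₗ g := by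
    rw [← comp_assoc, hfP]; rfl
  have right : (f ∘ₗ s ∘ₗ g) ∘ₗ PX = f ∘ₗ (s ∘ₗ PB) ∘ₗ g := by
    rw [comp_assoc, comp_assoc, ← hgP]; rfl
  rw [shear, comp_add, add_comp, comp_id, id_comp, left, right, add_right_inj, cancel_left hf,
    cancel_right hg, eq_comm]

end Shear

section Cobracket

variable {R : Type*} [CommRing R]
variable {A : Type*} [AddCommGroup A] [Module R A]
variable {B : Type*} [AddCommGroup B] [Module R B]
variable {X : Type*} [AddCommGroup X] [Module R X]
variable {f : A →ₗ[R] X} {g : X →ₗ[R] B} {t : X →ₗ[R] A}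
variable {ΔA : A →ₗ[R] A ⊗[R] A} {ΔB : B →ₗ[R] B ⊗[R] B} {ΔX : X →ₗ[R] X ⊗[R] X}
variable {ρ : B →ₗ[R] B ⊗[R] A} {s : B →ₗ[R] A}

theorem map_comp_eq_neg_comm_comp_map (hanti : ΔX = -((TensorProduct.comm R X X).toLinearMap ∘ₗ ΔX))
    (a : X →ₗ[R] A) (b : X →ₗ[R] B) :
    TensorProduct.map a b ∘ₗ ΔX
      = -((TensorProduct.comm R B A).toLinearMap ∘ₗ TensorProduct.map b a ∘ₗ ΔX) := by
  conv_lhs => rw [hanti]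
  rw [comp_neg, ← comp_assoc, TensorProduct.map_comp_comm_eq, comp_assoc]

theorem map_comp_map_shear_sub (hgf : g ∘ₗ f = 0) (ht : t ∘ₗ f = LinearMap.id)
    (hg : TensorProduct.map g g ∘ₗ ΔX = ΔB ∘ₗ g) (hρ : ρ ∘ₗ g = TensorProduct.map g t ∘ₗ ΔX)
    (s : B →ₗ[R] A) :
    TensorProduct.map g t ∘ₗ
        (TensorProduct.map (shear f g s) (shear f g s) ∘ₗ ΔX - ΔX ∘ₗ shear f g s)
      = (lTensor B s ∘ₗ ΔB) ∘ₗ g := by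
  have source : TensorProduct.map g t ∘ₗ ΔX ∘ₗ shear f g s = ρ ∘ₗ g := by
    rw [← comp_assoc, ← hρ, comp_assoc, comp_shear hgf]
  have target : TensorProduct.map g t ∘ₗ TensorProduct.map (shear f g s) (shear f g s) ∘ₗ ΔX
      = ρ ∘ₗ g + (lTensor B s ∘ₗ ΔB) ∘ₗ g := by
    rw [← comp_assoc, ← TensorProduct.map_comp, comp_shear hgf, retraction_comp_shear ht,
      TensorProduct.map_add_right, add_comp, ← hρ, comp_assoc, ← hg, ← comp_assoc, lTensor_comp_map]
  rw [comp_sub, source, target, add_sub_cancel_left]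

theorem map_id_comp_eq_map_map_comp (hfg : Function.Exact f g) (hgs : Function.Surjective g)
    (ht : t ∘ₗ f = LinearMap.id) (hg : TensorProduct.map g g ∘ₗ ΔX = ΔB ∘ₗ g)
    (hs : lTensor B s ∘ₗ ΔB = 0) :
    TensorProduct.map LinearMap.id (f ∘ₗ s ∘ₗ g) ∘ₗ ΔX
      = TensorProduct.map f f ∘ₗ TensorProduct.map t (s ∘ₗ g) ∘ₗ ΔX := by
  have vanish : (LinearMap.id - f ∘ₗ t) ∘ₗ f = 0 := by
    rw [sub_comp, comp_assoc, ht, comp_id, id_comp, sub_self]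
  obtain ⟨σ, hσ⟩ := exists_comp_eq_of_exact_s17 hfg hgs vanish
  have id_eq : LinearMap.id = f ∘ₗ t + σ ∘ₗ g := by rw [hσ, add_sub_cancel]
  have σ_term : TensorProduct.map (σ ∘ₗ g) (f ∘ₗ s ∘ₗ g) ∘ₗ ΔX = 0 := calc
    _ = TensorProduct.map σ f ∘ₗ lTensor B s ∘ₗ TensorProduct.map g g ∘ₗ ΔX := by
        rw [TensorProduct.map_comp, comp_assoc, ← comp_assoc _ _ (lTensor B s), lTensor_comp_map]
    _ = 0 := by rw [hg, ← comp_assoc _ _ (lTensor B s), hs, zero_comp, comp_zero]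
  rw [id_eq, TensorProduct.map_add_left, add_comp, σ_term, add_zero, TensorProduct.map_comp,
    comp_assoc]

theorem map_shear_comp_sub_comp_shear (hfg : Function.Exact f g) (hgs : Function.Surjective g)
    (ht : t ∘ₗ f = LinearMap.id) (hanti : ΔX = -((TensorProduct.comm R X X).toLinearMap ∘ₗ ΔX))
    (hf : TensorProduct.map f f ∘ₗ ΔA = ΔX ∘ₗ f) (hg : TensorProduct.map g g ∘ₗ ΔX = ΔB ∘ₗ g)
    (hρ : ρ ∘ₗ g = TensorProduct.map g t ∘ₗ ΔX) (hs : lTensor B s ∘ₗ ΔB = 0) :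
    TensorProduct.map (shear f g s) (shear f g s) ∘ₗ ΔX - ΔX ∘ₗ shear f g s
      = TensorProduct.map f f ∘ₗ
        ((TensorProduct.map s LinearMap.id ∘ₗ ρ
            - (TensorProduct.comm R A A).toLinearMap ∘ₗ TensorProduct.map s LinearMap.id ∘ₗ ρ)
          - (ΔA ∘ₗ s - TensorProduct.map s s ∘ₗ ΔB)) ∘ₗ g := by
  have sg_t : TensorProduct.map (s ∘ₗ g) t ∘ₗ ΔX = TensorProduct.map s LinearMap.id ∘ₗ ρ ∘ₗ g := by
    rw [hρ, ← comp_assoc, ← TensorProduct.map_comp, id_comp]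
  have right_term : TensorProduct.map LinearMap.id (f ∘ₗ s ∘ₗ g) ∘ₗ ΔX
      = -(TensorProduct.map f f ∘ₗ (TensorProduct.comm R A A).toLinearMap ∘ₗ
          TensorProduct.map s LinearMap.id ∘ₗ ρ ∘ₗ g) := by
    rw [map_id_comp_eq_map_map_comp hfg hgs ht hg hs, map_comp_eq_neg_comm_comp_map hanti, sg_t,
      comp_neg]
  have left_term : TensorProduct.map (f ∘ₗ s ∘ₗ g) LinearMap.id ∘ₗ ΔX
      = TensorProduct.map f f ∘ₗ TensorProduct.map s LinearMap.id ∘ₗ ρ ∘ₗ g := by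
    rw [map_comp_eq_neg_comm_comp_map hanti, right_term, comp_neg, neg_neg, ← comp_assoc,
      ← TensorProduct.map_comp_comm_eq, comp_assoc, TensorProduct.comm_comp_comm_assoc]
  have both_term : TensorProduct.map (f ∘ₗ s ∘ₗ g) (f ∘ₗ s ∘ₗ g) ∘ₗ ΔX
      = TensorProduct.map f f ∘ₗ TensorProduct.map s s ∘ₗ ΔB ∘ₗ g := by
    rw [TensorProduct.map_comp, TensorProduct.map_comp, comp_assoc, comp_assoc, hg]
  have source : ΔX ∘ₗ f ∘ₗ s ∘ₗ g = TensorProduct.map f f ∘ₗ ΔA ∘ₗ s ∘ₗ g := by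
    rw [← comp_assoc, ← hf, comp_assoc]
  simp only [shear, TensorProduct.map_add_left, TensorProduct.map_add_right, add_comp, comp_add,
    sub_comp, comp_sub, comp_assoc, left_term, right_term, both_term, source,
    TensorProduct.map_id, comp_id, id_comp]
  abel

theorem map_shear_comp_eq_comp_shear_iff (hfg : Function.Exact f g)
    (hgs : Function.Surjective g) (ht : t ∘ₗ f = LinearMap.id)
    (hanti : ΔX = -((TensorProduct.comm R X X).toLinearMap ∘ₗ ΔX))
    (hf : TensorProduct.map f f ∘ₗ ΔA = ΔX ∘ₗ f) (hg : TensorProduct.map g g ∘ₗ ΔX = ΔB ∘ₗ g)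
    (hρ : ρ ∘ₗ g = TensorProduct.map g t ∘ₗ ΔX) :
    TensorProduct.map (shear f g s) (shear f g s) ∘ₗ ΔX = ΔX ∘ₗ shear f g s ↔
      TensorProduct.map s LinearMap.id ∘ₗ ρ
          - (TensorProduct.comm R A A).toLinearMap ∘ₗ TensorProduct.map s LinearMap.id ∘ₗ ρ
        = ΔA ∘ₗ s - TensorProduct.map s s ∘ₗ ΔB ∧
      lTensor B s ∘ₗ ΔB = 0 := by
  have map_injective : Function.Injective (TensorProduct.map f f) := by
    refine Function.LeftInverse.injective (g := TensorProduct.map t t) fun x => ?_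
    rw [TensorProduct.map_map, ht, TensorProduct.map_id, id_apply]
  rw [← sub_eq_zero]
  constructor
  · intro hdefect
    have hs : lTensor B s ∘ₗ ΔB = 0 := by
      rw [← cancel_right hgs, ← map_comp_map_shear_sub hfg.linearMap_comp_eq_zero ht hg hρ,
        hdefect, comp_zero, zero_comp]
    rw [map_shear_comp_sub_comp_shear hfg hgs ht hanti hf hg hρ hs] at hdefect
    have defect_comp_eq_zero := (cancel_left map_injective).1 (hdefect.trans (comp_zero _).symm)
    exact ⟨sub_eq_zero.1 ((cancel_right hgs).1 (defect_comp_eq_zero.trans (zero_comp g).symm)), hs⟩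
  · rintro ⟨hcocycle, hs⟩
    rw [map_shear_comp_sub_comp_shear hfg hgs ht hanti hf hg hρ hs, sub_eq_zero.2 hcocycle,
      zero_comp, comp_zero]

end Cobracket

section Extension

variable {R : Type*} [CommRing R]
variable {A : Type*} [AddCommGroup A] [Module R A]
variable {B : Type*} [AddCommGroup B] [Module R B]
variable {X : Type*} [AddCommGroup X] [Module R X]

/-- Non-abelian 1-cocycles of `B` with values in `A`: the condition `IsNA1Cocycle` over a
commutative ring, for arbitrary linear maps `ΔA`, `PA`, `ΔB`, `PB`. -/
def IsOneCocycle (ΔA : A →ₗ[R] A ⊗[R] A) (PA : A →ₗ[R] A) (ΔB : B →ₗ[R] B ⊗[R] B)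
    (PB : B →ₗ[R] B) (ρ : B →ₗ[R] B ⊗[R] A) (s : B →ₗ[R] A) : Prop :=
  (TensorProduct.map s LinearMap.id ∘ₗ ρ
      - (TensorProduct.comm R A A).toLinearMap ∘ₗ TensorProduct.map s LinearMap.id ∘ₗ ρ
    = ΔA ∘ₗ s - TensorProduct.map s s ∘ₗ ΔB) ∧
  lTensor B s ∘ₗ ΔB = 0 ∧
  s ∘ₗ PB = PA ∘ₗ s

/-- Automorphisms of `(X, ΔX, PX)` that induce the identity on both ends of the extension
`A → X → B`: the condition `InKerK` over a commutative ring, for arbitrary linear maps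
`ΔX`, `PX`. -/
def IsExtensionAut (ΔX : X →ₗ[R] X ⊗[R] X) (PX : X →ₗ[R] X) (f : A →ₗ[R] X) (g : X →ₗ[R] B)
    (t : X →ₗ[R] A) (γ : X →ₗ[R] X) : Prop :=
  (TensorProduct.map γ γ ∘ₗ ΔX = ΔX ∘ₗ γ ∧ PX ∘ₗ γ = γ ∘ₗ PX) ∧ Function.Bijective γ ∧
    t ∘ₗ γ ∘ₗ f = LinearMap.id ∧ g ∘ₗ γ = g

theorem isExtensionAut_shear_iff {ΔA : A →ₗ[R] A ⊗[R] A} {PA : A →ₗ[R] A}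
    {ΔB : B →ₗ[R] B ⊗[R] B} {PB : B →ₗ[R] B} {ΔX : X →ₗ[R] X ⊗[R] X} {PX : X →ₗ[R] X}
    {f : A →ₗ[R] X} {g : X →ₗ[R] B} {t : X →ₗ[R] A} {ρ : B →ₗ[R] B ⊗[R] A} {s : B →ₗ[R] A}
    (hfg : Function.Exact f g) (hgs : Function.Surjective g) (ht : t ∘ₗ f = LinearMap.id)
    (hanti : ΔX = -((TensorProduct.comm R X X).toLinearMap ∘ₗ ΔX))
    (hf : TensorProduct.map f f ∘ₗ ΔA = ΔX ∘ₗ f ∧ PX ∘ₗ f = f ∘ₗ PA)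
    (hg : TensorProduct.map g g ∘ₗ ΔX = ΔB ∘ₗ g ∧ PB ∘ₗ g = g ∘ₗ PX)
    (hρ : ρ ∘ₗ g = TensorProduct.map g t ∘ₗ ΔX) :
    IsExtensionAut ΔX PX f g t (shear f g s) ↔ IsOneCocycle ΔA PA ΔB PB ρ s := by
  have hgf : g ∘ₗ f = 0 := hfg.linearMap_comp_eq_zero
  have hfi : Function.Injective f :=
    Function.LeftInverse.injective (g := t) (LinearMap.congr_fun ht)
  have identity_on_ends : t ∘ₗ shear f g s ∘ₗ f = LinearMap.id ∧ g ∘ₗ shear f g s = g :=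
    ⟨by rw [shear_comp hgf, ht], comp_shear hgf s⟩
  rw [IsExtensionAut, IsOneCocycle, map_shear_comp_eq_comp_shear_iff hfg hgs ht hanti hf.1 hg.1 hρ,
    comp_shear_eq_shear_comp_iff hfi hgs hf.2 hg.2, and_assoc, and_assoc]
  simp only [shear_bijective hgf s, identity_on_ends, and_self, and_true]

theorem stmt17_general {ΔA : A →ₗ[R] A ⊗[R] A} {PA : A →ₗ[R] A}
    {ΔB : B →ₗ[R] B ⊗[R] B} {PB : B →ₗ[R] B} {ΔX : X →ₗ[R] X ⊗[R] X} {PX : X →ₗ[R] X}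
    {f : A →ₗ[R] X} {g : X →ₗ[R] B} {t : X →ₗ[R] A} {ρ : B →ₗ[R] B ⊗[R] A}
    (hfg : Function.Exact f g) (hgs : Function.Surjective g) (ht : t ∘ₗ f = LinearMap.id)
    (hanti : ΔX = -((TensorProduct.comm R X X).toLinearMap ∘ₗ ΔX))
    (hf : TensorProduct.map f f ∘ₗ ΔA = ΔX ∘ₗ f ∧ PX ∘ₗ f = f ∘ₗ PA)
    (hg : TensorProduct.map g g ∘ₗ ΔX = ΔB ∘ₗ g ∧ PB ∘ₗ g = g ∘ₗ PX)
    (hρ : ρ ∘ₗ g = TensorProduct.map g t ∘ₗ ΔX) :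
    (∀ γ : X →ₗ[R] X, IsExtensionAut ΔX PX f g t γ →
      ∀ x x' : X, g x = g x' → t (γ x) - t x = t (γ x') - t x') ∧
    (∀ γ : X →ₗ[R] X, IsExtensionAut ΔX PX f g t γ → ∃! s : B →ₗ[R] A, s ∘ₗ g = t ∘ₗ γ - t) ∧
    (∀ γ : X →ₗ[R] X, IsExtensionAut ΔX PX f g t γ →
      ∀ s : B →ₗ[R] A, s ∘ₗ g = t ∘ₗ γ - t → IsOneCocycle ΔA PA ΔB PB ρ s) ∧
    (∀ γ₁ γ₂ : X →ₗ[R] X, IsExtensionAut ΔX PX f g t γ₁ → IsExtensionAut ΔX PX f g t γ₂ →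
      ∀ s₁ s₂ s₁₂ : B →ₗ[R] A,
        s₁ ∘ₗ g = t ∘ₗ γ₁ - t → s₂ ∘ₗ g = t ∘ₗ γ₂ - t →
        s₁₂ ∘ₗ g = t ∘ₗ (γ₁ ∘ₗ γ₂) - t → s₁₂ = s₁ + s₂) ∧
    (∀ γ₁ γ₂ : X →ₗ[R] X, IsExtensionAut ΔX PX f g t γ₁ → IsExtensionAut ΔX PX f g t γ₂ →
      ∀ s : B →ₗ[R] A, s ∘ₗ g = t ∘ₗ γ₁ - t → s ∘ₗ g = t ∘ₗ γ₂ - t → γ₁ = γ₂) ∧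
    (∀ s : B →ₗ[R] A, IsOneCocycle ΔA PA ΔB PB ρ s →
      ∃ γ : X →ₗ[R] X, IsExtensionAut ΔX PX f g t γ ∧ s ∘ₗ g = t ∘ₗ γ - t) := by
  have hgf : g ∘ₗ f = 0 := hfg.linearMap_comp_eq_zero
  have eq_shear {γ} (hγ : IsExtensionAut ΔX PX f g t γ) {s} (hs : s ∘ₗ g = t ∘ₗ γ - t) :
      γ = shear f g s := (comp_eq_sub_iff_eq_shear hfg ht hγ.2.2.2).1 hs
  have comp_eq (s) : s ∘ₗ g = t ∘ₗ shear f g s - t :=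
    (comp_eq_sub_iff_eq_shear hfg ht (comp_shear hgf s)).2 rfl
  have shear_iff {s} : IsExtensionAut ΔX PX f g t (shear f g s) ↔ IsOneCocycle ΔA PA ΔB PB ρ s :=
    isExtensionAut_shear_iff hfg hgs ht hanti hf hg hρ
  have exists_comp_eq {γ} (hγ : IsExtensionAut ΔX PX f g t γ) : ∃ s, s ∘ₗ g = t ∘ₗ γ - t := by
    obtain ⟨s, rfl⟩ := exists_eq_shear hfg hgs ht hγ.2.2.1 hγ.2.2.2
    exact ⟨s, comp_eq s⟩
  refine ⟨fun γ hγ x x' hx => ?_, fun γ hγ => ?_, fun γ hγ s hs => ?_,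
    fun γ₁ γ₂ h₁ h₂ s₁ s₂ s₁₂ hs₁ hs₂ hs₁₂ => ?_, fun γ₁ γ₂ h₁ h₂ s hs₁ hs₂ => ?_, fun s hs => ?_⟩
  · obtain ⟨s, hs⟩ := exists_comp_eq hγ
    exact (LinearMap.congr_fun hs x).symm.trans
      ((congrArg s hx).trans (LinearMap.congr_fun hs x'))
  · obtain ⟨s, hs⟩ := exists_comp_eq hγ
    exact ⟨s, hs, fun s' hs' => (cancel_right hgs).1 (hs'.trans hs.symm)⟩
  · exact shear_iff.1 (eq_shear hγ hs ▸ hγ)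
  · rw [eq_shear h₁ hs₁, eq_shear h₂ hs₂, shear_comp_shear hgf, ← comp_eq] at hs₁₂
    exact (cancel_right hgs).1 hs₁₂
  · exact (eq_shear h₁ hs₁).trans (eq_shear h₂ hs₂).symm
  · exact ⟨shear f g s, shear_iff.2 hs, comp_eq s⟩

end Extension

theorem stmt17 (lam : k) (ΔC : C →ₗ[k] C ⊗[k] C) (RC : C →ₗ[k] C)
    (ΔM : M →ₗ[k] M ⊗[k] M) (RM : M →ₗ[k] M)
    (ΔE : E →ₗ[k] E ⊗[k] E) (RE : E →ₗ[k] E)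
    (hC : IsRBLC lam ΔC RC) (hM : IsRBLC lam ΔM RM) (hE : IsRBLC lam ΔE RE)
    (f : C →ₗ[k] E) (g : E →ₗ[k] M)
    (homf : IsHom ΔC RC ΔE RE f) (homg : IsHom ΔE RE ΔM RM g)
    (injf : Function.Injective f) (surjg : Function.Surjective g)
    (hexact : LinearMap.range f = LinearMap.ker g)
    (t : E →ₗ[k] C) (ht : t ∘ₗ f = LinearMap.id)
    (h : M →ₗ[k] C ⊗[k] C) (ρ : M →ₗ[k] M ⊗[k] C) (φ : M →ₗ[k] C)
    (hh : h ∘ₗ g = TensorProduct.map t t ∘ₗ ΔE - ΔC ∘ₗ t)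
    (hρ : ρ ∘ₗ g = TensorProduct.map g t ∘ₗ ΔE)
    (hφ : φ ∘ₗ g = t ∘ₗ RE - RC ∘ₗ t) :
    -- `s_γ(g(e)) = tγ(e) − t(e)` is well defined ...
    (∀ γ : E →ₗ[k] E, InKerK ΔE RE f g t γ →
      ∀ e e' : E, g e = g e' → t (γ e) - t e = t (γ e') - t e') ∧
    -- ... and exists as a linear map:
    (∀ γ : E →ₗ[k] E, InKerK ΔE RE f g t γ →
      ∃! s : M →ₗ[k] C, s ∘ₗ g = t ∘ₗ γ - t) ∧
    -- `χ` takes values in `Z¹_nab(M,C)`: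
    (∀ γ : E →ₗ[k] E, InKerK ΔE RE f g t γ →
      ∀ s : M →ₗ[k] C, s ∘ₗ g = t ∘ₗ γ - t →
        IsNA1Cocycle ΔC RC ΔM RM ρ s) ∧
    -- `χ` is a group homomorphism: `χ(γ₁γ₂) = χ(γ₁) + χ(γ₂)`:
    (∀ γ₁ γ₂ : E →ₗ[k] E, InKerK ΔE RE f g t γ₁ → InKerK ΔE RE f g t γ₂ →
      ∀ s₁ s₂ s₁₂ : M →ₗ[k] C,
        s₁ ∘ₗ g = t ∘ₗ γ₁ - t → s₂ ∘ₗ g = t ∘ₗ γ₂ - t →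
        s₁₂ ∘ₗ g = t ∘ₗ (γ₁ ∘ₗ γ₂) - t → s₁₂ = s₁ + s₂) ∧
    -- `χ` is injective:
    (∀ γ₁ γ₂ : E →ₗ[k] E, InKerK ΔE RE f g t γ₁ → InKerK ΔE RE f g t γ₂ →
      ∀ s : M →ₗ[k] C, s ∘ₗ g = t ∘ₗ γ₁ - t → s ∘ₗ g = t ∘ₗ γ₂ - t → γ₁ = γ₂) ∧
    -- `χ` is surjective:
    (∀ s : M →ₗ[k] C, IsNA1Cocycle ΔC RC ΔM RM ρ s →
      ∃ γ : E →ₗ[k] E, InKerK ΔE RE f g t γ ∧ s ∘ₗ g = t ∘ₗ γ - t) := by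
  exact stmt17_general (exact_iff.2 hexact.symm) surjg ht hE.1 homf homg hρ

end
end

section
/- Let 0 → C →f E →g M → 0 be an abelian extension of the λ-weighted Rota-Baxter Lie coalgebra (C, Δ_C, R_C) by (M, Δ_M, R_M) (so Δ_M = 0), let t be a retraction, and define ρ : M → M⊗C by ρ(g(e)) = (g⊗t)Δ_E(e). Then (M, ρ, R_M) is a right Lie comodule of (C, Δ_C, R_C): (I⊗Δ_C)ρ − (ρ⊗I)ρ + (I⊗τ)(ρ⊗I)ρ = 0 and (R_M⊗R_C)ρ = (R_M⊗I + I⊗R_C + λI)ρR_M. -/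
open TensorProduct LinearMap

section

variable {k : Type*} [Field k]
variable {C : Type*} [AddCommGroup C] [Module k C]
variable {M : Type*} [AddCommGroup M] [Module k M]
variable {E : Type*} [AddCommGroup E] [Module k E]

/-- Right Lie comodule condition `(I⊗Δ)ρ - (ρ⊗I)ρ + (I⊗τ)(ρ⊗I)ρ = 0`. -/
def IsCoMod (Δ : C →ₗ[k] C ⊗[k] C) (ρ : M →ₗ[k] M ⊗[k] C) : Prop :=
  lTensor M Δ ∘ₗ ρ
    - (TensorProduct.assoc k M C C).toLinearMap ∘ₗ rTensor C ρ ∘ₗ ρ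
    + lTensor M (TensorProduct.comm k C C).toLinearMap ∘ₗ
        (TensorProduct.assoc k M C C).toLinearMap ∘ₗ rTensor C ρ ∘ₗ ρ = 0

/-- `(R_M⊗R_C)ρ = (R_M⊗I + I⊗R_C + λI)ρR_M`. -/
def IsRBCoModMap (lam : k) (ρ : M →ₗ[k] M ⊗[k] C) (RC : C →ₗ[k] C) (RM : M →ₗ[k] M) : Prop :=
  TensorProduct.map RM RC ∘ₗ ρ
    = (rTensor C RM + lTensor M RC +
        lam • (LinearMap.id : M ⊗[k] C →ₗ[k] M ⊗[k] C)) ∘ₗ ρ ∘ₗ RM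

/-!
Since `Δ_M = 0`, the element `(g ⊗ I)Δ_E(e)` is killed by `I ⊗ g`, so right exactness of the tensor
product puts it in the image of `I ⊗ f`. Hence it is fixed by `I ⊗ ft`, which says
`(g ⊗ I)Δ_E = (I ⊗ f)ρg`. It follows that pushing the co-Jacobi expression of `Δ_E` along
`g ⊗ t ⊗ t`, and its Rota-Baxter expression along `g ⊗ t`, gives the corresponding expressions of
`ρ` precomposed with `g`. The former vanish and `g` is surjective, so the latter vanish too.
-/

section Transport

variable {R : Type*} [CommRing R]
variable {C : Type*} [AddCommGroup C] [Module R C]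
variable {M : Type*} [AddCommGroup M] [Module R M]
variable {E : Type*} [AddCommGroup E] [Module R E]

/-- The failure `(I⊗Δ)ρ - (ρ⊗I)ρ + (I⊗τ)(ρ⊗I)ρ` of `ρ` to be a right Lie coaction of `(C, Δ)`.
For `ρ = Δ` it is the left-hand side of the co-Jacobi identity, so that one definition covers both
the hypothesis on the extension and the conclusion on the comodule. -/
noncomputable def lieComoduleDefect (Δ : C →ₗ[R] C ⊗[R] C) (ρ : M →ₗ[R] M ⊗[R] C) :
    M →ₗ[R] M ⊗[R] (C ⊗[R] C) :=
  lTensor M Δ ∘ₗ ρ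
    - (TensorProduct.assoc R M C C).toLinearMap ∘ₗ rTensor C ρ ∘ₗ ρ
    + lTensor M (TensorProduct.comm R C C).toLinearMap ∘ₗ
        (TensorProduct.assoc R M C C).toLinearMap ∘ₗ rTensor C ρ ∘ₗ ρ

/-- The failure `(S⊗T)ρ - (S⊗I + I⊗T + λI)ρS` of `S : M → M` to be a Rota-Baxter operator of weight
`λ` on the coaction `ρ` over `T : C → C`. For `ρ = Δ` and `S = T` it is the failure of `T` to be a
Rota-Baxter operator on the coalgebra `(C, Δ)`. -/
noncomputable def rotaBaxterDefect (lam : R) (ρ : M →ₗ[R] M ⊗[R] C) (T : C →ₗ[R] C)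
    (S : M →ₗ[R] M) : M →ₗ[R] M ⊗[R] C :=
  TensorProduct.map S T ∘ₗ ρ
    - (rTensor C S + lTensor M T + lam • (LinearMap.id : M ⊗[R] C →ₗ[R] M ⊗[R] C)) ∘ₗ ρ ∘ₗ S

variable {f : C →ₗ[R] E} {g : E →ₗ[R] M} {t : E →ₗ[R] C}

lemma lTensor_retraction_apply_of_lTensor_eq_zero {P : Type*} [AddCommGroup P] [Module R P]
    (hfg : Function.Exact f g) (hg : Function.Surjective g) (ht : t ∘ₗ f = LinearMap.id)
    {x : P ⊗[R] E} (hx : lTensor P g x = 0) :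
    lTensor P f (lTensor P t x) = x := by
  obtain ⟨y, rfl⟩ := (lTensor_exact P hfg hg x).mp hx
  rw [← lTensor_comp_apply P t f, ht, lTensor_id_apply]

variable {ΔC : C →ₗ[R] C ⊗[R] C} {ΔE : E →ₗ[R] E ⊗[R] E} {ρ : M →ₗ[R] M ⊗[R] C}

lemma rTensor_comp_eq_lTensor_comp_coaction (hfg : Function.Exact f g)
    (hg : Function.Surjective g) (ht : t ∘ₗ f = LinearMap.id)
    (hgg : TensorProduct.map g g ∘ₗ ΔE = 0) (hρ : ρ ∘ₗ g = TensorProduct.map g t ∘ₗ ΔE) :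
    rTensor E g ∘ₗ ΔE = lTensor M f ∘ₗ ρ ∘ₗ g := by
  ext e
  have hker : lTensor M g (rTensor E g (ΔE e)) = 0 := by
    rw [← LinearMap.comp_apply, lTensor_comp_rTensor]
    exact LinearMap.congr_fun hgg e
  rw [hρ, ← lTensor_comp_rTensor]
  exact (lTensor_retraction_apply_of_lTensor_eq_zero hfg hg ht hker).symm

lemma map_comp_eq_lTensor_comp_coaction {X : Type*} [AddCommGroup X] [Module R X]
    (hfac : rTensor E g ∘ₗ ΔE = lTensor M f ∘ₗ ρ ∘ₗ g) (u : E →ₗ[R] X) :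
    TensorProduct.map g u ∘ₗ ΔE = lTensor M (u ∘ₗ f) ∘ₗ ρ ∘ₗ g := by
  rw [← lTensor_comp_rTensor, LinearMap.comp_assoc, hfac, lTensor_comp, LinearMap.comp_assoc]

lemma coaction_comp_eq_map_comp (hfac : rTensor E g ∘ₗ ΔE = lTensor M f ∘ₗ ρ ∘ₗ g)
    (ht : t ∘ₗ f = LinearMap.id) : ρ ∘ₗ g = TensorProduct.map g t ∘ₗ ΔE := by
  rw [map_comp_eq_lTensor_comp_coaction hfac, ht, lTensor_id, LinearMap.id_comp]

lemma map_comp_lTensor_cobracket (hfac : rTensor E g ∘ₗ ΔE = lTensor M f ∘ₗ ρ ∘ₗ g)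
    (ht : t ∘ₗ f = LinearMap.id) (hfΔ : TensorProduct.map f f ∘ₗ ΔC = ΔE ∘ₗ f) :
    TensorProduct.map g (TensorProduct.map t t) ∘ₗ lTensor E ΔE ∘ₗ ΔE
      = lTensor M ΔC ∘ₗ ρ ∘ₗ g := by
  have hΔC : (TensorProduct.map t t ∘ₗ ΔE) ∘ₗ f = ΔC := by
    rw [LinearMap.comp_assoc, ← hfΔ, ← LinearMap.comp_assoc, ← TensorProduct.map_comp, ht,
      TensorProduct.map_id, LinearMap.id_comp]
  rw [← LinearMap.comp_assoc, map_comp_lTensor, map_comp_eq_lTensor_comp_coaction hfac, hΔC]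

lemma map_comp_assoc_comp_rTensor_cobracket (hρ : ρ ∘ₗ g = TensorProduct.map g t ∘ₗ ΔE) :
    TensorProduct.map g (TensorProduct.map t t) ∘ₗ
        (TensorProduct.assoc R E E E).toLinearMap ∘ₗ rTensor E ΔE ∘ₗ ΔE
      = (TensorProduct.assoc R M C C).toLinearMap ∘ₗ rTensor C ρ ∘ₗ ρ ∘ₗ g := by
  have hcoaction : TensorProduct.map (TensorProduct.map g t) t ∘ₗ rTensor E ΔE
      = rTensor C ρ ∘ₗ TensorProduct.map g t := by
    rw [map_comp_rTensor, rTensor_comp_map, hρ]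
  rw [← LinearMap.comp_assoc, TensorProduct.map_map_comp_assoc_eq, LinearMap.comp_assoc,
    ← LinearMap.comp_assoc ΔE, hcoaction, LinearMap.comp_assoc, hρ]

theorem lieComoduleDefect_comp (hfac : rTensor E g ∘ₗ ΔE = lTensor M f ∘ₗ ρ ∘ₗ g)
    (ht : t ∘ₗ f = LinearMap.id) (hfΔ : TensorProduct.map f f ∘ₗ ΔC = ΔE ∘ₗ f) :
    lieComoduleDefect ΔC ρ ∘ₗ g
      = TensorProduct.map g (TensorProduct.map t t) ∘ₗ lieComoduleDefect ΔE ΔE := by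
  have hcoaction := map_comp_assoc_comp_rTensor_cobracket (coaction_comp_eq_map_comp hfac ht)
  have hswap : TensorProduct.map g (TensorProduct.map t t) ∘ₗ
        lTensor E (TensorProduct.comm R E E).toLinearMap ∘ₗ
        (TensorProduct.assoc R E E E).toLinearMap ∘ₗ rTensor E ΔE ∘ₗ ΔE
      = lTensor M (TensorProduct.comm R C C).toLinearMap ∘ₗ
        (TensorProduct.assoc R M C C).toLinearMap ∘ₗ rTensor C ρ ∘ₗ ρ ∘ₗ g := by
    rw [← LinearMap.comp_assoc, map_comp_lTensor, TensorProduct.map_comp_comm_eq,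
      ← lTensor_comp_map, LinearMap.comp_assoc, hcoaction]
  simp only [lieComoduleDefect, LinearMap.comp_add, LinearMap.comp_sub, LinearMap.add_comp,
    LinearMap.sub_comp, LinearMap.comp_assoc, map_comp_lTensor_cobracket hfac ht hfΔ, hcoaction,
    hswap]

theorem rotaBaxterDefect_comp (lam : R) {RC : C →ₗ[R] C} {RM : M →ₗ[R] M} {RE : E →ₗ[R] E}
    (hfac : rTensor E g ∘ₗ ΔE = lTensor M f ∘ₗ ρ ∘ₗ g) (ht : t ∘ₗ f = LinearMap.id)
    (hfR : RE ∘ₗ f = f ∘ₗ RC) (hgR : RM ∘ₗ g = g ∘ₗ RE) :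
    rotaBaxterDefect lam ρ RC RM ∘ₗ g
      = TensorProduct.map g t ∘ₗ rotaBaxterDefect lam ΔE RE RE := by
  have hρ := coaction_comp_eq_map_comp hfac ht
  have hRC : (t ∘ₗ RE) ∘ₗ f = RC := by
    rw [LinearMap.comp_assoc, hfR, ← LinearMap.comp_assoc, ht, LinearMap.id_comp]
  have hright : TensorProduct.map g t ∘ₗ lTensor E RE ∘ₗ ΔE = lTensor M RC ∘ₗ ρ ∘ₗ g := by
    rw [← LinearMap.comp_assoc, map_comp_lTensor, map_comp_eq_lTensor_comp_coaction hfac, hRC]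
  have hleft : TensorProduct.map g t ∘ₗ rTensor E RE ∘ₗ ΔE = rTensor C RM ∘ₗ ρ ∘ₗ g := by
    rw [← LinearMap.comp_assoc, map_comp_rTensor, ← hgR, ← rTensor_comp_map, LinearMap.comp_assoc,
      hρ]
  have hboth : TensorProduct.map g t ∘ₗ TensorProduct.map RE RE ∘ₗ ΔE
      = TensorProduct.map RM RC ∘ₗ ρ ∘ₗ g := by
    rw [← LinearMap.comp_assoc, ← TensorProduct.map_comp, ← hgR, ← rTensor_comp_map,
      LinearMap.comp_assoc, map_comp_eq_lTensor_comp_coaction hfac, hRC, ← LinearMap.comp_assoc,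
      rTensor_comp_lTensor]
  have hsum : TensorProduct.map g t ∘ₗ (rTensor E RE + lTensor E RE + lam • LinearMap.id) ∘ₗ ΔE
      = (rTensor C RM + lTensor M RC + lam • LinearMap.id) ∘ₗ ρ ∘ₗ g := by
    simp only [LinearMap.add_comp, LinearMap.comp_add, LinearMap.smul_comp, LinearMap.comp_smul,
      LinearMap.id_comp, hleft, hright, hρ]
  rw [rotaBaxterDefect, rotaBaxterDefect, LinearMap.sub_comp, LinearMap.comp_sub, hboth]
  congr 1
  calc ((rTensor C RM + lTensor M RC + lam • LinearMap.id) ∘ₗ ρ ∘ₗ RM) ∘ₗ g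
      = ((rTensor C RM + lTensor M RC + lam • LinearMap.id) ∘ₗ ρ ∘ₗ g) ∘ₗ RE := by
        simp only [LinearMap.comp_assoc, hgR]
    _ = TensorProduct.map g t ∘ₗ
          (rTensor E RE + lTensor E RE + lam • LinearMap.id) ∘ₗ ΔE ∘ₗ RE := by
        rw [← hsum, LinearMap.comp_assoc, LinearMap.comp_assoc]

theorem stmt18_general (lam : R) {RC : C →ₗ[R] C} {RM : M →ₗ[R] M} {RE : E →ₗ[R] E}
    (hJacobi : lieComoduleDefect ΔE ΔE = 0) (hRB : rotaBaxterDefect lam ΔE RE RE = 0)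
    (hfΔ : TensorProduct.map f f ∘ₗ ΔC = ΔE ∘ₗ f) (hfR : RE ∘ₗ f = f ∘ₗ RC)
    (hgg : TensorProduct.map g g ∘ₗ ΔE = 0) (hgR : RM ∘ₗ g = g ∘ₗ RE)
    (hfg : Function.Exact f g) (hg : Function.Surjective g) (ht : t ∘ₗ f = LinearMap.id)
    (hρ : ρ ∘ₗ g = TensorProduct.map g t ∘ₗ ΔE) :
    lieComoduleDefect ΔC ρ = 0 ∧ rotaBaxterDefect lam ρ RC RM = 0 := by
  have hfac := rTensor_comp_eq_lTensor_comp_coaction hfg hg ht hgg hρ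
  constructor <;> rw [← LinearMap.cancel_right hg, LinearMap.zero_comp]
  · rw [lieComoduleDefect_comp hfac ht hfΔ, hJacobi, LinearMap.comp_zero]
  · rw [rotaBaxterDefect_comp lam hfac ht hfR hgR, hRB, LinearMap.comp_zero]

end Transport

lemma isRBO_iff_rotaBaxterDefect_eq_zero {lam : k} {Δ : C →ₗ[k] C ⊗[k] C} {T : C →ₗ[k] C} :
    IsRBO lam Δ T ↔ rotaBaxterDefect lam Δ T T = 0 := by
  rw [IsRBO, rotaBaxterDefect, sub_eq_zero, add_comm (lTensor C T)]

lemma isRBCoModMap_iff_rotaBaxterDefect_eq_zero {lam : k} {ρ : M →ₗ[k] M ⊗[k] C}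
    {T : C →ₗ[k] C} {S : M →ₗ[k] M} :
    IsRBCoModMap lam ρ T S ↔ rotaBaxterDefect lam ρ T S = 0 :=
  sub_eq_zero.symm

theorem stmt18 (lam : k) (ΔC : C →ₗ[k] C ⊗[k] C) (RC : C →ₗ[k] C)
    (ΔM : M →ₗ[k] M ⊗[k] M) (RM : M →ₗ[k] M)
    (ΔE : E →ₗ[k] E ⊗[k] E) (RE : E →ₗ[k] E)
    (hC : IsRBLC lam ΔC RC) (hM : IsRBLC lam ΔM RM) (hE : IsRBLC lam ΔE RE)
    -- the extension is abelian:
    (habelian : ΔM = 0)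
    (f : C →ₗ[k] E) (g : E →ₗ[k] M)
    (homf : IsHom ΔC RC ΔE RE f) (homg : IsHom ΔE RE ΔM RM g)
    (injf : Function.Injective f) (surjg : Function.Surjective g)
    (hexact : LinearMap.range f = LinearMap.ker g)
    (t : E →ₗ[k] C) (ht : t ∘ₗ f = LinearMap.id)
    (ρ : M →ₗ[k] M ⊗[k] C)
    (hρ : ρ ∘ₗ g = TensorProduct.map g t ∘ₗ ΔE) :
    IsCoMod ΔC ρ ∧ IsRBCoModMap lam ρ RC RM := by
  rw [isRBCoModMap_iff_rotaBaxterDefect_eq_zero]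
  exact stmt18_general lam hE.2.1 (isRBO_iff_rotaBaxterDefect_eq_zero.mp hE.2.2) homf.1 homf.2
    (by rw [homg.1, habelian, LinearMap.zero_comp]) homg.2
    (LinearMap.exact_iff.mpr hexact.symm) surjg ht hρ

end
end

section
/- Let 0 → C →f E →g M → 0 be an abelian extension of the λ-weighted Rota-Baxter Lie coalgebra (C, Δ_C, R_C) by (M, Δ_M, R_M) (so Δ_M = 0) with retraction t, and let (h, ρ, φ) be the induced maps h(g(e)) = (t⊗t)Δ_E(e) − Δ_C t(e), ρ(g(e)) = (g⊗t)Δ_E(e), φ(g(e)) = tR_E(e) − R_C t(e). A pair (α, β) ∈ Aut(C)×Aut(M) is extensible with respect to this abelian extension if and only if there exists a linear map s : M → C satisfying: hβ − (α⊗α)h = (s⊗α)ρ − τ(s⊗α)ρ − Δ_C s; ρβ = (β⊗α)ρ; and φβ − αφ = sR_M − R_C s. -/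
open TensorProduct LinearMap

section

variable {k : Type*} [Field k]
variable {C : Type*} [AddCommGroup C] [Module k C]
variable {M : Type*} [AddCommGroup M] [Module k M]
variable {E : Type*} [AddCommGroup E] [Module k E]

/-!
A retraction `t` identifies `E` with `C ⊕ M`, and the linear endomorphisms of `E` that restrict to
`α` on `C` and induce `β` on `M` are exactly the block matrices `[[α, s], [0, β]]` with
`s : M → C` linear. Such a block matrix `γ` is bijective by the short five lemma, so everything
comes down to when it commutes with `Δ_E` and `R_E`. The two sides of `(γ ⊗ γ)Δ_E = Δ_E γ` always
have the same `M ⊗ M` component, and their `C ⊗ M` and `M ⊗ C` components determine each other by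
co-antisymmetry. What remains are the `C ⊗ C` and `M ⊗ C` components of this identity and the `C`
component of `R_E γ = γ R_E`, which are the three equations on `s`.
-/

section ShortExact

variable {R A X B A' X' B' : Type*} [CommRing R]
  [AddCommGroup A] [Module R A] [AddCommGroup X] [Module R X] [AddCommGroup B] [Module R B]
  [AddCommGroup A'] [Module R A'] [AddCommGroup X'] [Module R X'] [AddCommGroup B'] [Module R B']

theorem bijective_of_bijective_of_bijective_of_shortExact
    {f : A →ₗ[R] X} {g : X →ₗ[R] B} {f' : A' →ₗ[R] X'} {g' : X' →ₗ[R] B'}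
    {α : A →ₗ[R] A'} {γ : X →ₗ[R] X'} {β : B →ₗ[R] B'}
    (injf : Function.Injective f) (hfg : Function.Exact f g) (surjg : Function.Surjective g)
    (injf' : Function.Injective f') (hfg' : Function.Exact f' g') (surjg' : Function.Surjective g')
    (hγf : γ ∘ₗ f = f' ∘ₗ α) (hgγ : g' ∘ₗ γ = β ∘ₗ g)
    (bijα : Function.Bijective α) (bijβ : Function.Bijective β) : Function.Bijective γ := by
  have exactf : Function.Exact (0 : PUnit →ₗ[R] A) f := (exact_zero_iff_injective _ f).mpr injf
  have exactg : Function.Exact g (0 : B →ₗ[R] PUnit) := (exact_zero_iff_surjective _ g).mpr surjg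
  have exactf' : Function.Exact (0 : PUnit →ₗ[R] A') f' :=
    (exact_zero_iff_injective _ f').mpr injf'
  have exactg' : Function.Exact g' (0 : B' →ₗ[R] PUnit) :=
    (exact_zero_iff_surjective _ g').mpr surjg'
  exact bijective_of_surjective_of_bijective_of_bijective_of_injective
    (0 : PUnit →ₗ[R] A) f g (0 : B →ₗ[R] PUnit) (0 : PUnit →ₗ[R] A') f' g' (0 : B' →ₗ[R] PUnit)
    LinearMap.id α γ β LinearMap.id (by simp) hγf.symm hgγ (by simp) exactf hfg exactg
    exactf' hfg' exactg' Function.surjective_id bijα bijβ Function.injective_id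

end ShortExact

/-- `X` is the direct sum of `A` and `B`, with inclusions `i`, `j` and projections `p`, `q`. The
four maps are arguments rather than data, so that a split extension with given inclusion,
retraction and quotient map can be decomposed without replacing its middle term by a product. -/
structure IsBiproduct {R A X B : Type*} [Semiring R] [AddCommMonoid A] [Module R A]
    [AddCommMonoid X] [Module R X] [AddCommMonoid B] [Module R B]
    (i : A →ₗ[R] X) (p : X →ₗ[R] A) (j : B →ₗ[R] X) (q : X →ₗ[R] B) : Prop where
  fst_comp_inl : p ∘ₗ i = LinearMap.id
  snd_comp_inl : q ∘ₗ i = 0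
  fst_comp_inr : p ∘ₗ j = 0
  snd_comp_inr : q ∘ₗ j = LinearMap.id
  inl_comp_fst_add_inr_comp_snd : i ∘ₗ p + j ∘ₗ q = LinearMap.id

theorem exists_isBiproduct_of_retraction {R A X B : Type*} [Ring R] [AddCommGroup A] [Module R A]
    [AddCommGroup X] [Module R X] [AddCommGroup B] [Module R B]
    {f : A →ₗ[R] X} {g : X →ₗ[R] B} {t : X →ₗ[R] A} (hfg : Function.Exact f g)
    (surjg : Function.Surjective g) (ht : t ∘ₗ f = LinearMap.id) :
    ∃ j : B →ₗ[R] X, IsBiproduct f t j g := by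
  let e := (hfg.splitInjectiveEquiv surjg ⟨t, ht⟩).1
  have hef : f = e.symm ∘ₗ inl R A B := (hfg.splitInjectiveEquiv surjg ⟨t, ht⟩).2.1
  have het : t = fst R A B ∘ₗ e := rfl
  have heg : g = snd R A B ∘ₗ e := rfl
  refine ⟨e.symm ∘ₗ inr R A B, ht, hfg.linearMap_comp_eq_zero, ?_, ?_, ?_⟩ <;>
    ext <;> simp [hef, het, heg, ← map_add]

/-- The endomorphism of a direct sum `X` of `A` and `B` with block matrix `[[a, s], [0, b]]`, for
inclusions `i`, `j` and projections `p`, `q` as in `IsBiproduct`. -/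
def upperTriangular {R A X B : Type*} [Semiring R] [AddCommMonoid A] [Module R A]
    [AddCommMonoid X] [Module R X] [AddCommMonoid B] [Module R B]
    (i : A →ₗ[R] X) (p : X →ₗ[R] A) (j : B →ₗ[R] X) (q : X →ₗ[R] B)
    (a : A →ₗ[R] A) (s : B →ₗ[R] A) (b : B →ₗ[R] B) : X →ₗ[R] X :=
  i ∘ₗ (a ∘ₗ p + s ∘ₗ q) + j ∘ₗ b ∘ₗ q

namespace IsBiproduct

section Semiring

variable {R A X B Y : Type*} [Semiring R] [AddCommMonoid A] [Module R A]
  [AddCommMonoid X] [Module R X] [AddCommMonoid B] [Module R B] [AddCommMonoid Y] [Module R Y]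
  {i : A →ₗ[R] X} {p : X →ₗ[R] A} {j : B →ₗ[R] X} {q : X →ₗ[R] B}

theorem hom_ext (hX : IsBiproduct i p j q) {u v : Y →ₗ[R] X}
    (hp : p ∘ₗ u = p ∘ₗ v) (hq : q ∘ₗ u = q ∘ₗ v) : u = v := by
  rw [← id_comp u, ← id_comp v, ← hX.inl_comp_fst_add_inr_comp_snd]
  simp only [add_comp, comp_assoc, hp, hq]

theorem fst_comp_upperTriangular (hX : IsBiproduct i p j q) (a : A →ₗ[R] A) (s : B →ₗ[R] A)
    (b : B →ₗ[R] B) : p ∘ₗ upperTriangular i p j q a s b = a ∘ₗ p + s ∘ₗ q := by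
  simp only [upperTriangular, comp_add, ← comp_assoc, hX.fst_comp_inl, hX.fst_comp_inr, id_comp,
    zero_comp, add_zero]

theorem snd_comp_upperTriangular (hX : IsBiproduct i p j q) (a : A →ₗ[R] A) (s : B →ₗ[R] A)
    (b : B →ₗ[R] B) : q ∘ₗ upperTriangular i p j q a s b = b ∘ₗ q := by
  simp only [upperTriangular, comp_add, ← comp_assoc, hX.snd_comp_inl, hX.snd_comp_inr, id_comp,
    zero_comp, zero_add]

theorem upperTriangular_comp_inl (hX : IsBiproduct i p j q) (a : A →ₗ[R] A) (s : B →ₗ[R] A)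
    (b : B →ₗ[R] B) : upperTriangular i p j q a s b ∘ₗ i = i ∘ₗ a := by
  simp only [upperTriangular, add_comp, comp_assoc, hX.fst_comp_inl, hX.snd_comp_inl, comp_id,
    comp_zero, add_zero]

theorem eq_upperTriangular (hX : IsBiproduct i p j q) {a : A →ₗ[R] A} {b : B →ₗ[R] B}
    {c : X →ₗ[R] X} (hi : c ∘ₗ i = i ∘ₗ a) (hq : q ∘ₗ c = b ∘ₗ q) :
    c = upperTriangular i p j q a (p ∘ₗ c ∘ₗ j) b := by
  refine hX.hom_ext ?_ (by rw [hX.snd_comp_upperTriangular, hq])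
  have hpci : p ∘ₗ c ∘ₗ i = a := by rw [hi, ← comp_assoc, hX.fst_comp_inl, id_comp]
  calc p ∘ₗ c = p ∘ₗ c ∘ₗ (i ∘ₗ p + j ∘ₗ q) := by
        rw [hX.inl_comp_fst_add_inr_comp_snd, comp_id]
    _ = (p ∘ₗ c ∘ₗ i) ∘ₗ p + (p ∘ₗ c ∘ₗ j) ∘ₗ q := by simp only [comp_add, comp_assoc]
    _ = p ∘ₗ upperTriangular i p j q a (p ∘ₗ c ∘ₗ j) b := by
        rw [hpci, hX.fst_comp_upperTriangular]

end Semiring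

theorem tensor_hom_ext {R A X B A' X' B' Y : Type*} [CommSemiring R]
    [AddCommMonoid A] [Module R A] [AddCommMonoid X] [Module R X] [AddCommMonoid B] [Module R B]
    [AddCommMonoid A'] [Module R A'] [AddCommMonoid X'] [Module R X']
    [AddCommMonoid B'] [Module R B'] [AddCommMonoid Y] [Module R Y]
    {i : A →ₗ[R] X} {p : X →ₗ[R] A} {j : B →ₗ[R] X} {q : X →ₗ[R] B}
    {i' : A' →ₗ[R] X'} {p' : X' →ₗ[R] A'} {j' : B' →ₗ[R] X'} {q' : X' →ₗ[R] B'}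
    (hX : IsBiproduct i p j q) (hX' : IsBiproduct i' p' j' q') {u v : Y →ₗ[R] X ⊗[R] X'}
    (hpp : TensorProduct.map p p' ∘ₗ u = TensorProduct.map p p' ∘ₗ v)
    (hpq : TensorProduct.map p q' ∘ₗ u = TensorProduct.map p q' ∘ₗ v)
    (hqp : TensorProduct.map q p' ∘ₗ u = TensorProduct.map q p' ∘ₗ v)
    (hqq : TensorProduct.map q q' ∘ₗ u = TensorProduct.map q q' ∘ₗ v) : u = v := by
  rw [← id_comp u, ← id_comp v, ← TensorProduct.map_id, ← hX.inl_comp_fst_add_inr_comp_snd,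
    ← hX'.inl_comp_fst_add_inr_comp_snd]
  simp only [TensorProduct.map_add_left, TensorProduct.map_add_right, TensorProduct.map_comp,
    add_comp, comp_assoc, hpp, hpq, hqp, hqq]

end IsBiproduct

theorem CoAnti.map_comp_swap {A B : Type*} [AddCommGroup A] [Module k A]
    [AddCommGroup B] [Module k B] {Δ : E →ₗ[k] E ⊗[k] E} (hΔ : CoAnti Δ)
    (a : E →ₗ[k] A) (b : E →ₗ[k] B) :
    TensorProduct.map b a ∘ₗ Δ =
      -((TensorProduct.comm k A B).toLinearMap ∘ₗ TensorProduct.map a b ∘ₗ Δ) := by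
  conv_lhs => rw [hΔ, comp_neg, ← comp_assoc, TensorProduct.map_comp_comm_eq, comp_assoc]

section BlockTriangular

variable {ΔC : C →ₗ[k] C ⊗[k] C} {RC : C →ₗ[k] C} {ΔM : M →ₗ[k] M ⊗[k] M} {RM : M →ₗ[k] M}
  {ΔE : E →ₗ[k] E ⊗[k] E} {RE : E →ₗ[k] E} {f : C →ₗ[k] E} {t : E →ₗ[k] C} {q : M →ₗ[k] E}
  {g : E →ₗ[k] M} {h : M →ₗ[k] C ⊗[k] C} {ρ : M →ₗ[k] M ⊗[k] C} {φ : M →ₗ[k] C}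
  {α : C →ₗ[k] C} {β : M →ₗ[k] M} {s : M →ₗ[k] C} {γ : E →ₗ[k] E}

theorem map_retraction_comp_map_comp_cobracket (hΔE : CoAnti ΔE)
    (hgΔ : TensorProduct.map g g ∘ₗ ΔE = ΔM ∘ₗ g) (hρ : ρ ∘ₗ g = TensorProduct.map g t ∘ₗ ΔE)
    (htγ : t ∘ₗ γ = α ∘ₗ t + s ∘ₗ g) :
    TensorProduct.map t t ∘ₗ TensorProduct.map γ γ ∘ₗ ΔE =
      TensorProduct.map α α ∘ₗ TensorProduct.map t t ∘ₗ ΔE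
        + (TensorProduct.map s α ∘ₗ ρ
          - (TensorProduct.comm k C C).toLinearMap ∘ₗ TensorProduct.map s α ∘ₗ ρ
          + TensorProduct.map s s ∘ₗ ΔM) ∘ₗ g := by
  have hsα : TensorProduct.map (s ∘ₗ g) (α ∘ₗ t) ∘ₗ ΔE = TensorProduct.map s α ∘ₗ ρ ∘ₗ g := by
    rw [TensorProduct.map_comp, comp_assoc, hρ]
  have hαs : TensorProduct.map (α ∘ₗ t) (s ∘ₗ g) ∘ₗ ΔE =
      -((TensorProduct.comm k C C).toLinearMap ∘ₗ TensorProduct.map s α ∘ₗ ρ ∘ₗ g) := by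
    rw [hΔE.map_comp_swap, hsα]
  have hss : TensorProduct.map (s ∘ₗ g) (s ∘ₗ g) ∘ₗ ΔE = TensorProduct.map s s ∘ₗ ΔM ∘ₗ g := by
    rw [TensorProduct.map_comp, comp_assoc, hgΔ]
  rw [← comp_assoc, ← TensorProduct.map_comp, htγ]
  simp only [TensorProduct.map_add_left, TensorProduct.map_add_right, add_comp, sub_comp,
    hsα, hαs, hss, comp_assoc, TensorProduct.map_comp α α]
  abel

theorem map_retraction_cobracket_commutes_iff (hΔE : CoAnti ΔE) (surjg : Function.Surjective g)
    (hgΔ : TensorProduct.map g g ∘ₗ ΔE = ΔM ∘ₗ g) (hρ : ρ ∘ₗ g = TensorProduct.map g t ∘ₗ ΔE)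
    (hh : h ∘ₗ g = TensorProduct.map t t ∘ₗ ΔE - ΔC ∘ₗ t)
    (hαΔ : TensorProduct.map α α ∘ₗ ΔC = ΔC ∘ₗ α)
    (htγ : t ∘ₗ γ = α ∘ₗ t + s ∘ₗ g) (hgγ : g ∘ₗ γ = β ∘ₗ g) :
    TensorProduct.map t t ∘ₗ TensorProduct.map γ γ ∘ₗ ΔE = TensorProduct.map t t ∘ₗ ΔE ∘ₗ γ ↔
      h ∘ₗ β - TensorProduct.map α α ∘ₗ h
        = TensorProduct.map s α ∘ₗ ρ
          - (TensorProduct.comm k C C).toLinearMap ∘ₗ TensorProduct.map s α ∘ₗ ρ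
          + TensorProduct.map s s ∘ₗ ΔM - ΔC ∘ₗ s := by
  have htt : TensorProduct.map t t ∘ₗ ΔE = h ∘ₗ g + ΔC ∘ₗ t := by rw [hh, sub_add_cancel]
  have htΔγ : TensorProduct.map t t ∘ₗ ΔE ∘ₗ γ =
      h ∘ₗ β ∘ₗ g + (TensorProduct.map α α ∘ₗ ΔC ∘ₗ t + ΔC ∘ₗ s ∘ₗ g) := by
    rw [← comp_assoc, htt, add_comp, comp_assoc, hgγ, comp_assoc, htγ, comp_add,
      ← comp_assoc _ _ ΔC, ← hαΔ, comp_assoc]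
  rw [map_retraction_comp_map_comp_cobracket hΔE hgΔ hρ htγ, htΔγ, htt, ← cancel_right surjg]
  simp only [sub_comp, add_comp, comp_add, comp_assoc]
  rw [eq_comm, ← sub_eq_zero, ← sub_eq_zero (b := _ - _)]
  exact iff_of_eq (congrArg (· = 0) (by abel))

theorem map_projection_retraction_cobracket_commutes_iff (surjg : Function.Surjective g)
    (hgΔ : TensorProduct.map g g ∘ₗ ΔE = ΔM ∘ₗ g) (hρ : ρ ∘ₗ g = TensorProduct.map g t ∘ₗ ΔE)
    (htγ : t ∘ₗ γ = α ∘ₗ t + s ∘ₗ g) (hgγ : g ∘ₗ γ = β ∘ₗ g) :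
    TensorProduct.map g t ∘ₗ TensorProduct.map γ γ ∘ₗ ΔE = TensorProduct.map g t ∘ₗ ΔE ∘ₗ γ ↔
      ρ ∘ₗ β = TensorProduct.map β α ∘ₗ ρ + TensorProduct.map β s ∘ₗ ΔM := by
  have hγΔ : TensorProduct.map g t ∘ₗ TensorProduct.map γ γ ∘ₗ ΔE =
      (TensorProduct.map β α ∘ₗ ρ + TensorProduct.map β s ∘ₗ ΔM) ∘ₗ g := by
    rw [← comp_assoc, ← TensorProduct.map_comp, htγ, hgγ, TensorProduct.map_add_right,
      TensorProduct.map_comp, TensorProduct.map_comp, add_comp, comp_assoc, comp_assoc, hgΔ, ← hρ,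
      add_comp, comp_assoc, comp_assoc]
  have hΔγ : TensorProduct.map g t ∘ₗ ΔE ∘ₗ γ = (ρ ∘ₗ β) ∘ₗ g := by
    rw [← comp_assoc, ← hρ, comp_assoc, hgγ, comp_assoc]
  rw [hγΔ, hΔγ, cancel_right surjg, eq_comm]

theorem retraction_operator_commutes_iff (surjg : Function.Surjective g)
    (hgR : RM ∘ₗ g = g ∘ₗ RE) (hφ : φ ∘ₗ g = t ∘ₗ RE - RC ∘ₗ t) (hαR : RC ∘ₗ α = α ∘ₗ RC)
    (htγ : t ∘ₗ γ = α ∘ₗ t + s ∘ₗ g) (hgγ : g ∘ₗ γ = β ∘ₗ g) :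
    t ∘ₗ RE ∘ₗ γ = t ∘ₗ γ ∘ₗ RE ↔ φ ∘ₗ β - α ∘ₗ φ = s ∘ₗ RM - RC ∘ₗ s := by
  have htR : t ∘ₗ RE = φ ∘ₗ g + RC ∘ₗ t := by rw [hφ, sub_add_cancel]
  have hRγ : t ∘ₗ RE ∘ₗ γ = φ ∘ₗ β ∘ₗ g + (α ∘ₗ RC ∘ₗ t + RC ∘ₗ s ∘ₗ g) := by
    rw [← comp_assoc, htR, add_comp, comp_assoc, hgγ, comp_assoc, htγ, comp_add,
      ← comp_assoc _ _ RC, hαR, comp_assoc]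
  have hγR : t ∘ₗ γ ∘ₗ RE = α ∘ₗ φ ∘ₗ g + α ∘ₗ RC ∘ₗ t + s ∘ₗ RM ∘ₗ g := by
    rw [← comp_assoc, htγ, add_comp, comp_assoc, htR, comp_assoc, ← hgR, comp_add]
  rw [hRγ, hγR, ← cancel_right surjg, ← sub_eq_zero, ← sub_eq_zero (b := (_ - _) ∘ₗ g)]
  simp only [sub_comp, comp_assoc]
  exact iff_of_eq (congrArg (· = 0) (by abel))

theorem IsBiproduct.cobracket_commutes_iff (hE : IsBiproduct f t q g) (hΔE : CoAnti ΔE)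
    (hgΔ : TensorProduct.map g g ∘ₗ ΔE = ΔM ∘ₗ g)
    (hβΔ : TensorProduct.map β β ∘ₗ ΔM = ΔM ∘ₗ β) (hgγ : g ∘ₗ γ = β ∘ₗ g) :
    TensorProduct.map γ γ ∘ₗ ΔE = ΔE ∘ₗ γ ↔
      TensorProduct.map t t ∘ₗ TensorProduct.map γ γ ∘ₗ ΔE = TensorProduct.map t t ∘ₗ ΔE ∘ₗ γ ∧
      TensorProduct.map g t ∘ₗ TensorProduct.map γ γ ∘ₗ ΔE = TensorProduct.map g t ∘ₗ ΔE ∘ₗ γ := by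
  refine ⟨fun hγ => by rw [hγ]; exact ⟨rfl, rfl⟩, fun ⟨htt, hgt⟩ =>
    hE.tensor_hom_ext hE htt ?_ hgt ?_⟩
  · calc TensorProduct.map t g ∘ₗ TensorProduct.map γ γ ∘ₗ ΔE
        = -((TensorProduct.comm k M C).toLinearMap ∘ₗ
            TensorProduct.map g t ∘ₗ TensorProduct.map γ γ ∘ₗ ΔE) := by
          rw [← comp_assoc, ← TensorProduct.map_comp, hΔE.map_comp_swap, TensorProduct.map_comp,
            comp_assoc]
      _ = (-((TensorProduct.comm k M C).toLinearMap ∘ₗ TensorProduct.map g t ∘ₗ ΔE)) ∘ₗ γ := by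
          simp only [hgt, neg_comp, comp_assoc]
      _ = TensorProduct.map t g ∘ₗ ΔE ∘ₗ γ := by rw [← hΔE.map_comp_swap, comp_assoc]
  · calc TensorProduct.map g g ∘ₗ TensorProduct.map γ γ ∘ₗ ΔE
        = TensorProduct.map β β ∘ₗ TensorProduct.map g g ∘ₗ ΔE := by
          simp only [← comp_assoc, ← TensorProduct.map_comp, hgγ]
      _ = ΔM ∘ₗ g ∘ₗ γ := by rw [hgΔ, ← comp_assoc, hβΔ, comp_assoc, hgγ]
      _ = TensorProduct.map g g ∘ₗ ΔE ∘ₗ γ := by rw [← comp_assoc, ← hgΔ, comp_assoc]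

theorem IsBiproduct.operator_commutes_iff (hE : IsBiproduct f t q g)
    (hgR : RM ∘ₗ g = g ∘ₗ RE) (hβR : RM ∘ₗ β = β ∘ₗ RM) (hgγ : g ∘ₗ γ = β ∘ₗ g) :
    RE ∘ₗ γ = γ ∘ₗ RE ↔ t ∘ₗ RE ∘ₗ γ = t ∘ₗ γ ∘ₗ RE := by
  refine ⟨fun hγ => by rw [hγ], fun ht => hE.hom_ext ht ?_⟩
  calc g ∘ₗ RE ∘ₗ γ = RM ∘ₗ β ∘ₗ g := by rw [← comp_assoc, ← hgR, comp_assoc, hgγ]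
    _ = β ∘ₗ g ∘ₗ RE := by rw [← comp_assoc, hβR, comp_assoc, hgR]
    _ = g ∘ₗ γ ∘ₗ RE := by rw [← comp_assoc, ← hgγ, comp_assoc]

theorem IsBiproduct.isHom_upperTriangular_iff (hE : IsBiproduct f t q g) (hΔE : CoAnti ΔE)
    (homg : IsHom ΔE RE ΔM RM g) (surjg : Function.Surjective g)
    (hh : h ∘ₗ g = TensorProduct.map t t ∘ₗ ΔE - ΔC ∘ₗ t)
    (hρ : ρ ∘ₗ g = TensorProduct.map g t ∘ₗ ΔE)
    (hφ : φ ∘ₗ g = t ∘ₗ RE - RC ∘ₗ t)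
    (homα : IsHom ΔC RC ΔC RC α) (homβ : IsHom ΔM RM ΔM RM β) :
    IsHom ΔE RE ΔE RE (upperTriangular f t q g α s β) ↔
      h ∘ₗ β - TensorProduct.map α α ∘ₗ h
        = TensorProduct.map s α ∘ₗ ρ
          - (TensorProduct.comm k C C).toLinearMap ∘ₗ TensorProduct.map s α ∘ₗ ρ
          + TensorProduct.map s s ∘ₗ ΔM - ΔC ∘ₗ s ∧
      ρ ∘ₗ β = TensorProduct.map β α ∘ₗ ρ + TensorProduct.map β s ∘ₗ ΔM ∧
      φ ∘ₗ β - α ∘ₗ φ = s ∘ₗ RM - RC ∘ₗ s := by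
  have htγ := hE.fst_comp_upperTriangular α s β
  have hgγ := hE.snd_comp_upperTriangular α s β
  rw [IsHom, hE.cobracket_commutes_iff hΔE homg.1 homβ.1 hgγ,
    hE.operator_commutes_iff homg.2 homβ.2 hgγ,
    map_retraction_cobracket_commutes_iff hΔE surjg homg.1 hρ hh homα.1 htγ hgγ,
    map_projection_retraction_cobracket_commutes_iff surjg homg.1 hρ htγ hgγ,
    retraction_operator_commutes_iff surjg homg.2 hφ homα.2 htγ hgγ, and_assoc]

theorem IsBiproduct.extensible_iff_exists_isHom_upperTriangular (hE : IsBiproduct f t q g)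
    (hfg : Function.Exact f g) (bijα : Function.Bijective α) (bijβ : Function.Bijective β) :
    Extensible ΔE RE f g α β ↔
      ∃ s : M →ₗ[k] C, IsHom ΔE RE ΔE RE (upperTriangular f t q g α s β) := by
  constructor
  · rintro ⟨γ, homγ, -, -, hγf, hgγ⟩
    exact ⟨t ∘ₗ γ ∘ₗ q, hE.eq_upperTriangular hγf hgγ ▸ homγ⟩
  · rintro ⟨s, homγ⟩
    have hγf := hE.upperTriangular_comp_inl α s β
    have hgγ := hE.snd_comp_upperTriangular α s β
    have injf : Function.Injective f := injective_of_comp_eq_id f t hE.fst_comp_inl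
    have surjg : Function.Surjective g := surjective_of_comp_eq_id q g hE.snd_comp_inr
    refine ⟨_, homγ, bijective_of_bijective_of_bijective_of_shortExact injf hfg surjg injf hfg
      surjg hγf hgγ bijα bijβ, ?_, hγf, hgγ⟩
    rw [← range_comp, hγf, range_comp_of_range_eq_top _ (range_eq_top.mpr bijα.2)]

end BlockTriangular

theorem stmt19_general (ΔC : C →ₗ[k] C ⊗[k] C) (RC : C →ₗ[k] C)
    (ΔM : M →ₗ[k] M ⊗[k] M) (RM : M →ₗ[k] M)
    (ΔE : E →ₗ[k] E ⊗[k] E) (RE : E →ₗ[k] E) (hΔE : CoAnti ΔE)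
    (f : C →ₗ[k] E) (g : E →ₗ[k] M)
    (homg : IsHom ΔE RE ΔM RM g) (surjg : Function.Surjective g)
    (hexact : LinearMap.range f = LinearMap.ker g)
    (t : E →ₗ[k] C) (ht : t ∘ₗ f = LinearMap.id)
    (h : M →ₗ[k] C ⊗[k] C) (ρ : M →ₗ[k] M ⊗[k] C) (φ : M →ₗ[k] C)
    (hh : h ∘ₗ g = TensorProduct.map t t ∘ₗ ΔE - ΔC ∘ₗ t)
    (hρ : ρ ∘ₗ g = TensorProduct.map g t ∘ₗ ΔE)
    (hφ : φ ∘ₗ g = t ∘ₗ RE - RC ∘ₗ t)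
    (α : C →ₗ[k] C) (β : M →ₗ[k] M)
    (homα : IsHom ΔC RC ΔC RC α) (bijα : Function.Bijective α)
    (homβ : IsHom ΔM RM ΔM RM β) (bijβ : Function.Bijective β) :
    Extensible ΔE RE f g α β ↔
      ∃ s : M →ₗ[k] C,
        h ∘ₗ β - TensorProduct.map α α ∘ₗ h
          = TensorProduct.map s α ∘ₗ ρ
            - (TensorProduct.comm k C C).toLinearMap ∘ₗ TensorProduct.map s α ∘ₗ ρ
            + TensorProduct.map s s ∘ₗ ΔM - ΔC ∘ₗ s ∧
        ρ ∘ₗ β = TensorProduct.map β α ∘ₗ ρ + TensorProduct.map β s ∘ₗ ΔM ∧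
        φ ∘ₗ β - α ∘ₗ φ = s ∘ₗ RM - RC ∘ₗ s := by
  have hfg : Function.Exact f g := exact_iff.mpr hexact.symm
  obtain ⟨q, hE⟩ := exists_isBiproduct_of_retraction hfg surjg ht
  exact (hE.extensible_iff_exists_isHom_upperTriangular hfg bijα bijβ).trans <| exists_congr
    fun _ => hE.isHom_upperTriangular_iff hΔE homg surjg hh hρ hφ homα homβ

theorem stmt19 (lam : k) (ΔC : C →ₗ[k] C ⊗[k] C) (RC : C →ₗ[k] C)
    (ΔM : M →ₗ[k] M ⊗[k] M) (RM : M →ₗ[k] M)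
    (ΔE : E →ₗ[k] E ⊗[k] E) (RE : E →ₗ[k] E)
    (hC : IsRBLC lam ΔC RC) (hM : IsRBLC lam ΔM RM) (hE : IsRBLC lam ΔE RE)
    -- the extension is abelian:
    (habelian : ΔM = 0)
    (f : C →ₗ[k] E) (g : E →ₗ[k] M)
    (homf : IsHom ΔC RC ΔE RE f) (homg : IsHom ΔE RE ΔM RM g)
    (injf : Function.Injective f) (surjg : Function.Surjective g)
    (hexact : LinearMap.range f = LinearMap.ker g)
    (t : E →ₗ[k] C) (ht : t ∘ₗ f = LinearMap.id)
    (h : M →ₗ[k] C ⊗[k] C) (ρ : M →ₗ[k] M ⊗[k] C) (φ : M →ₗ[k] C)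
    (hh : h ∘ₗ g = TensorProduct.map t t ∘ₗ ΔE - ΔC ∘ₗ t)
    (hρ : ρ ∘ₗ g = TensorProduct.map g t ∘ₗ ΔE)
    (hφ : φ ∘ₗ g = t ∘ₗ RE - RC ∘ₗ t)
    (α : C →ₗ[k] C) (β : M →ₗ[k] M)
    (homα : IsHom ΔC RC ΔC RC α) (bijα : Function.Bijective α)
    (homβ : IsHom ΔM RM ΔM RM β) (bijβ : Function.Bijective β) :
    Extensible ΔE RE f g α β ↔
      ∃ s : M →ₗ[k] C,
        -- hβ − (α⊗α)h = (s⊗α)ρ − τ(s⊗α)ρ − Δ_C s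
        h ∘ₗ β - TensorProduct.map α α ∘ₗ h
          = TensorProduct.map s α ∘ₗ ρ
            - (TensorProduct.comm k C C).toLinearMap ∘ₗ TensorProduct.map s α ∘ₗ ρ
            - ΔC ∘ₗ s ∧
        -- ρβ = (β⊗α)ρ
        ρ ∘ₗ β = TensorProduct.map β α ∘ₗ ρ ∧
        -- φβ − αφ = sR_M − R_C s
        φ ∘ₗ β - α ∘ₗ φ = s ∘ₗ RM - RC ∘ₗ s := by
  subst habelian
  simpa only [comp_zero, add_zero] using stmt19_general ΔC RC 0 RM ΔE RE hE.1 f g homg surjg hexact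
    t ht h ρ φ hh hρ hφ α β homα bijα homβ bijβ

end
end
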